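/- arXiv:2212.14236 — 6 statements merged into one kernel-verified Lean document; each statement's English description precedes it below -/
import Mathlib

section
/- The multi-frequency far-field operator factorizes as F^{(x̂)} = L ∘ 𝒯 ∘ L*, where L* denotes the Hilbert-space adjoint of L. That is, for every φ ∈ L²(0,K) one has F^{(x̂)}φ = L(𝒯(L*φ)) in L²(0,K). -/
open MeasureTheory

noncomputable section

/-!
`L` is an integral operator with the square-integrable kernel `e^{-iτ h(t)}`, so by Fubini `L*` is
the integral operator with kernel `e^{is h(t)}`. Composing kernels, `L 𝒯 L*` has kernel
`(1/√(2π)) ∫ e^{-iτ h(t)} e^{-iκ h(t)} e^{is h(t)} dt = w∞(κ + τ - s)`, which is that of `F`.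
-/

section IntegralKernel

open ComplexConjugate

variable {𝕜 X Y Z : Type*} [RCLike 𝕜] [MeasurableSpace X] [MeasurableSpace Y] [MeasurableSpace Z]
  {μ : Measure X} {ν : Measure Y} {ρ : Measure Z}

theorem memLp_two_mul_prod {f : X → 𝕜} {g : Y → 𝕜}
    (hf : MemLp f 2 μ) (hg : MemLp g 2 ν) :
    MemLp (fun z : X × Y => f z.1 * g z.2) 2 (μ.prod ν) := by
  refine (memLp_two_iff_integrable_sq_norm
    (hf.aestronglyMeasurable.comp_fst.mul hg.aestronglyMeasurable.comp_snd)).2 ?_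
  simp only [Pi.mul_apply, norm_mul, mul_pow]
  exact ((memLp_two_iff_integrable_sq_norm hf.aestronglyMeasurable).1 hf).mul_prod
    ((memLp_two_iff_integrable_sq_norm hg.aestronglyMeasurable).1 hg)

theorem ae_memLp_two_prodMk_left [SFinite ν] {k : X → Y → 𝕜}
    (hk : MemLp (Function.uncurry k) 2 (μ.prod ν)) : ∀ᵐ x ∂μ, MemLp (k x) 2 ν := by
  have sq_integrable := (memLp_two_iff_integrable_sq_norm hk.aestronglyMeasurable).1 hk
  filter_upwards [hk.aestronglyMeasurable.prodMk_left,
    ((integrable_prod_iff sq_integrable.aestronglyMeasurable).1 sq_integrable).1] with x hmeas hsq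
  exact (memLp_two_iff_integrable_sq_norm hmeas).2 hsq

theorem integrable_kernel_mul_prod {k : X → Y → 𝕜}
    (hk : MemLp (Function.uncurry k) 2 (μ.prod ν)) {f : X → 𝕜} {g : Y → 𝕜}
    (hf : MemLp f 2 μ) (hg : MemLp g 2 ν) :
    Integrable (fun z : X × Y => k z.1 z.2 * (f z.1 * g z.2)) (μ.prod ν) :=
  hk.integrable_mul (memLp_two_mul_prod hf hg)

theorem integrable_restrict_prod_kernel_mul [SFinite μ] [SFinite ν] {k : X → Y → 𝕜}
    (hk : MemLp (Function.uncurry k) 2 (μ.prod ν)) {g : Y → 𝕜} (hg : MemLp g 2 ν)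
    {s : Set X} (hμs : μ s ≠ ⊤) :
    Integrable (fun z : X × Y => k z.1 z.2 * g z.2) ((μ.restrict s).prod ν) := by
  have : IsFiniteMeasure (μ.restrict s) := isFiniteMeasure_restrict.2 hμs
  have hk_restrict : MemLp (Function.uncurry k) 2 ((μ.restrict s).prod ν) := by
    rw [Measure.restrict_prod_eq_prod_univ]
    exact hk.restrict _
  simpa only [one_mul] using
    integrable_kernel_mul_prod hk_restrict (memLp_const (1 : 𝕜)) hg

theorem memLp_conj_swap [SFinite μ] [SFinite ν] {p : ENNReal} {k : X → Y → 𝕜}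
    (hk : MemLp (Function.uncurry k) p (μ.prod ν)) :
    MemLp (Function.uncurry fun y x => conj (k x y)) p (ν.prod μ) :=
  hk.star.comp_measurePreserving Measure.measurePreserving_swap

theorem memLp_mul_kernel {p : ENNReal} {m : X → 𝕜} {k : X → Y → 𝕜}
    (hm : MemLp m ⊤ μ) (hk : MemLp (Function.uncurry k) p (μ.prod ν)) :
    MemLp (Function.uncurry fun x y => m x * k x y) p (μ.prod ν) :=
  hk.mul (memLp_top_of_bound hm.aestronglyMeasurable.comp_fst _
    (Measure.quasiMeasurePreserving_fst.ae (ae_le_lpNorm_exponent_top hm)))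

/-- `HasIntegralKernel A k` says that the operator `A : L²(μ) → L²(ν)` is the integral operator
`(A ψ)(y) = ∫ k(y, x) ψ(x) dμ(x)`, for almost every `y`; the output variable of the kernel comes
first. No integrability of `k` is included. -/
def HasIntegralKernel (A : Lp 𝕜 2 μ →L[𝕜] Lp 𝕜 2 ν) (k : Y → X → 𝕜) : Prop :=
  ∀ ψ : Lp 𝕜 2 μ, (A ψ : Y → 𝕜) =ᵐ[ν] fun y => ∫ x, k y x * ψ x ∂μ

namespace HasIntegralKernel

theorem unique {A B : Lp 𝕜 2 μ →L[𝕜] Lp 𝕜 2 ν} {k : Y → X → 𝕜}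
    (hA : HasIntegralKernel A k) (hB : HasIntegralKernel B k) : A = B :=
  ContinuousLinearMap.ext fun ψ => Lp.ext ((hA ψ).trans (hB ψ).symm)

theorem apply_indicatorConstLp_one {A : Lp 𝕜 2 μ →L[𝕜] Lp 𝕜 2 ν} {k : Y → X → 𝕜}
    (hA : HasIntegralKernel A k) {s : Set X} (hs : MeasurableSet s) (hμs : μ s ≠ ⊤) :
    (A (indicatorConstLp 2 hs hμs 1) : Y → 𝕜) =ᵐ[ν] fun y => ∫ x in s, k y x ∂μ := by
  filter_upwards [hA (indicatorConstLp 2 hs hμs 1)] with y hy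
  rw [hy, ← integral_indicator hs]
  refine integral_congr_ae ?_
  filter_upwards [indicatorConstLp_coeFn (p := 2) (hs := hs) (hμs := hμs) (c := (1 : 𝕜))]
    with x hx
  by_cases hxs : x ∈ s <;> simp [hx, hxs]

theorem mul_comp {B : Lp 𝕜 2 μ →L[𝕜] Lp 𝕜 2 ν} {k : Y → X → 𝕜} (hB : HasIntegralKernel B k)
    {M : Lp 𝕜 2 ν →L[𝕜] Lp 𝕜 2 ν} {m : Y → 𝕜}
    (hM : ∀ φ : Lp 𝕜 2 ν, (M φ : Y → 𝕜) =ᵐ[ν] fun y => m y * φ y) :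
    HasIntegralKernel (M ∘L B) (fun y x => m y * k y x) := by
  intro ψ
  filter_upwards [hM (B ψ), hB ψ] with y hMy hBy
  simp only [ContinuousLinearMap.comp_apply, hMy, hBy, mul_assoc, integral_const_mul]

theorem comp [SFinite μ] [SFinite ν]
    {A : Lp 𝕜 2 ν →L[𝕜] Lp 𝕜 2 ρ} {k : Z → Y → 𝕜} (hA : HasIntegralKernel A k)
    (hk : MemLp (Function.uncurry k) 2 (ρ.prod ν))
    {B : Lp 𝕜 2 μ →L[𝕜] Lp 𝕜 2 ν} {l : Y → X → 𝕜} (hB : HasIntegralKernel B l)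
    (hl : MemLp (Function.uncurry l) 2 (ν.prod μ)) :
    HasIntegralKernel (A ∘L B) (fun z x => ∫ y, k z y * l y x ∂ν) := by
  intro ψ
  filter_upwards [hA (B ψ), ae_memLp_two_prodMk_left hk] with z hAz hkz
  calc (A (B ψ) : Z → 𝕜) z
    _ = ∫ y, k z y * B ψ y ∂ν := hAz
    _ = ∫ y, k z y * ∫ x, l y x * ψ x ∂μ ∂ν :=
      integral_congr_ae ((hB ψ).mono fun y hBy => congrArg (k z y * ·) hBy)
    _ = ∫ y, ∫ x, l y x * (k z y * ψ x) ∂μ ∂ν := by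
      simp only [← integral_const_mul, mul_left_comm]
    _ = ∫ x, ∫ y, l y x * (k z y * ψ x) ∂ν ∂μ :=
      integral_integral_swap (integrable_kernel_mul_prod hl hkz (Lp.memLp ψ))
    _ = ∫ x, (∫ y, k z y * l y x ∂ν) * ψ x ∂μ := by
      simp only [← integral_mul_const, mul_left_comm, mul_assoc]

variable [SFinite ν] {A : Lp 𝕜 2 μ →L[𝕜] Lp 𝕜 2 ν} {k : Y → X → 𝕜}

theorem setIntegral_adjoint [SFinite μ] (hA : HasIntegralKernel A k)
    (hk : MemLp (Function.uncurry k) 2 (ν.prod μ)) (φ : Lp 𝕜 2 ν) {s : Set X}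
    (hs : MeasurableSet s) (hμs : μ s ≠ ⊤) :
    ∫ x in s, ContinuousLinearMap.adjoint A φ x ∂μ =
      ∫ x in s, ∫ y, conj (k y x) * φ y ∂ν ∂μ :=
  calc ∫ x in s, ContinuousLinearMap.adjoint A φ x ∂μ
    _ = inner 𝕜 (indicatorConstLp 2 hs hμs 1) (ContinuousLinearMap.adjoint A φ) :=
      (L2.inner_indicatorConstLp_one hs hμs _).symm
    _ = ∫ y, inner 𝕜 (A (indicatorConstLp 2 hs hμs 1) y) (φ y) ∂ν := by
      rw [ContinuousLinearMap.adjoint_inner_right, L2.inner_def]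
    _ = ∫ y, ∫ x in s, conj (k y x) * φ y ∂μ ∂ν := by
      refine integral_congr_ae ?_
      filter_upwards [hA.apply_indicatorConstLp_one hs hμs] with y hy
      simp only [hy, RCLike.inner_apply', ← integral_conj, integral_mul_const]
    _ = ∫ x in s, ∫ y, conj (k y x) * φ y ∂ν ∂μ :=
      (integral_integral_swap (integrable_restrict_prod_kernel_mul (memLp_conj_swap hk)
        (Lp.memLp φ) hμs)).symm

-- Comparing integrals over sets of finite measure, rather than inner products, avoids having to
-- know beforehand that `x ↦ ∫ conj (k y x) * φ y ∂ν` is square-integrable.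
theorem adjoint [SigmaFinite μ] (hA : HasIntegralKernel A k)
    (hk : MemLp (Function.uncurry k) 2 (ν.prod μ)) :
    HasIntegralKernel (ContinuousLinearMap.adjoint A) (fun x y => conj (k y x)) := fun φ =>
  ae_eq_of_forall_setIntegral_eq_of_sigmaFinite
    (fun _ _ hμs => integrableOn_Lp_of_measure_ne_top _ one_le_two hμs.ne)
    (fun _ _ hμs => (integrable_restrict_prod_kernel_mul (memLp_conj_swap hk)
      (Lp.memLp φ) hμs.ne).integral_prod_left)
    (fun _ hs hμs => hA.setIntegral_adjoint hk φ hs hμs.ne)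

end HasIntegralKernel

end IntegralKernel

section Phase

open ComplexConjugate

variable {X : Type*} [MeasurableSpace X] {μ : Measure X} [IsFiniteMeasure μ]

theorem memLp_exp_neg_I_mul {θ : X → ℝ} (hθ : AEStronglyMeasurable θ μ) (p : ENNReal) :
    MemLp (fun x => Complex.exp (-Complex.I * θ x)) p μ := by
  refine MemLp.of_bound ?_ 1 (.of_forall fun x => ?_)
  · exact Complex.continuous_exp.comp_aestronglyMeasurable
      ((Complex.continuous_ofReal.comp_aestronglyMeasurable hθ).const_mul _)
  · simp [Complex.norm_exp]

theorem aestronglyMeasurable_id_add_inner {E : Type*} [NormedAddCommGroup E]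
    [InnerProductSpace ℝ E] {a : ℝ → E} {s : Set ℝ} (ha : ContinuousOn a s)
    (hs : MeasurableSet s) (x : E) :
    AEStronglyMeasurable (fun t => t + inner ℝ x (a t)) (volume.restrict s) :=
  (continuousOn_id.add (continuousOn_const.inner ha)).aestronglyMeasurable hs

theorem exp_phase_mul_mul_conj (κ τ s r : ℝ) :
    Complex.exp (-Complex.I * τ * r) * (Complex.exp (-Complex.I * κ * r) *
      conj (Complex.exp (-Complex.I * s * r))) =
      Complex.exp (-Complex.I * (κ + τ - s : ℝ) * r) := by
  rw [← Complex.exp_conj, ← Complex.exp_add, ← Complex.exp_add]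
  simp only [map_mul, map_neg, Complex.conj_I, Complex.conj_ofReal]
  push_cast
  ring_nf

theorem farFieldOperator_factorization_general {ν : Measure ℝ} [IsFiniteMeasure ν] {h : X → ℝ}
    (hh : AEStronglyMeasurable h μ) (c : ℂ) (κ : ℝ) {w : ℝ → ℂ}
    (hw : ∀ k : ℝ, w k = c * ∫ t, Complex.exp (-Complex.I * k * h t) ∂μ)
    {F : Lp ℂ 2 ν →L[ℂ] Lp ℂ 2 ν} (hF : HasIntegralKernel F fun τ s => w (κ + τ - s))
    {L : Lp ℂ 2 μ →L[ℂ] Lp ℂ 2 ν}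
    (hL : HasIntegralKernel L fun τ t => Complex.exp (-Complex.I * τ * h t))
    {T : Lp ℂ 2 μ →L[ℂ] Lp ℂ 2 μ}
    (hT : ∀ φ : Lp ℂ 2 μ,
      (T φ : X → ℂ) =ᵐ[μ] fun t => c * Complex.exp (-Complex.I * κ * h t) * φ t) :
    F = L ∘L T ∘L ContinuousLinearMap.adjoint L := by
  have kernel_memLp : MemLp (Function.uncurry fun (τ : ℝ) t => Complex.exp (-Complex.I * τ * h t))
      2 (ν.prod μ) := by
    have phase_measurable : AEStronglyMeasurable (fun z : ℝ × X => z.1 * h z.2) (ν.prod μ) :=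
      measurable_fst.aestronglyMeasurable.mul hh.comp_snd
    simpa only [Function.uncurry_def, Complex.ofReal_mul, ← mul_assoc] using
      memLp_exp_neg_I_mul phase_measurable 2
  have multiplier_memLp : MemLp (fun t => c * Complex.exp (-Complex.I * κ * h t)) ⊤ μ := by
    simpa only [Complex.ofReal_mul, ← mul_assoc] using
      (memLp_exp_neg_I_mul (hh.const_mul κ) ⊤).const_mul c
  have factored := hL.comp kernel_memLp ((hL.adjoint kernel_memLp).mul_comp hT)
    (memLp_mul_kernel multiplier_memLp (memLp_conj_swap kernel_memLp))
  refine hF.unique ?_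
  convert factored using 3 with τ s
  rw [hw, ← integral_const_mul]
  congr with t
  rw [← exp_phase_mul_mul_conj]
  ring

end Phase

/-- The multi-frequency far-field operator factorizes as
`F^{(x̂)} = L ∘ 𝒯 ∘ L*`: for every `φ ∈ L²(0,K)` one has `F^{(x̂)}φ = L(𝒯(L*φ))` in `L²(0,K)`.
Here `(Lψ)(τ) = ∫_{t_min}^{t_max} e^{−iτ h(t)} ψ(t) dt`,
`(𝒯φ)(t) = (1/√(2π)) e^{−iκ h(t)} φ(t)`, `h(t) = t + x̂·a(t)`,
`w∞(x̂,k) = (1/√(2π)) ∫_{t_min}^{t_max} e^{−ik h(t)} dt` and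
`(F^{(x̂)}φ)(τ) = ∫_0^K w∞(x̂, κ+τ−s) φ(s) ds`. -/
theorem farFieldOperator_factorization
    {d : ℕ} (hd : d = 2 ∨ d = 3)
    (tmin tmax : ℝ) (htmin : 0 < tmin) (htt : tmin < tmax)
    (kmin kmax : ℝ) (hkmin : 0 < kmin) (hkk : kmin < kmax)
    (κ K : ℝ) (hκ : κ = (kmin + kmax) / 2) (hKdef : K = (kmax - kmin) / 2)
    (a : ℝ → EuclideanSpace ℝ (Fin d))
    (ha : ContDiffOn ℝ 1 a (Set.Icc tmin tmax))
    (xhat : EuclideanSpace ℝ (Fin d)) (hxhat : ‖xhat‖ = 1)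
    (h : ℝ → ℝ) (hh : ∀ t, h t = t + inner ℝ xhat (a t))
    (w : ℝ → ℂ)
    (hw : ∀ k : ℝ, w k = (1 / Real.sqrt (2 * Real.pi)) *
      ∫ t in Set.Ioo tmin tmax, Complex.exp (-(Complex.I) * k * (h t)))
    (F : Lp ℂ 2 (volume.restrict (Set.Ioo 0 K)) →L[ℂ]
         Lp ℂ 2 (volume.restrict (Set.Ioo 0 K)))
    (hF : ∀ φ : Lp ℂ 2 (volume.restrict (Set.Ioo 0 K)),
      (F φ : ℝ → ℂ) =ᵐ[volume.restrict (Set.Ioo 0 K)]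
        fun τ => ∫ s in Set.Ioo 0 K, w (κ + τ - s) * φ s)
    (L : Lp ℂ 2 (volume.restrict (Set.Ioo tmin tmax)) →L[ℂ]
         Lp ℂ 2 (volume.restrict (Set.Ioo 0 K)))
    (hL : ∀ ψ : Lp ℂ 2 (volume.restrict (Set.Ioo tmin tmax)),
      (L ψ : ℝ → ℂ) =ᵐ[volume.restrict (Set.Ioo 0 K)]
        fun τ => ∫ t in Set.Ioo tmin tmax,
          Complex.exp (-(Complex.I) * τ * (h t)) * ψ t)
    (T : Lp ℂ 2 (volume.restrict (Set.Ioo tmin tmax)) →L[ℂ]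
         Lp ℂ 2 (volume.restrict (Set.Ioo tmin tmax)))
    (hT : ∀ φ : Lp ℂ 2 (volume.restrict (Set.Ioo tmin tmax)),
      (T φ : ℝ → ℂ) =ᵐ[volume.restrict (Set.Ioo tmin tmax)]
        fun t => (1 / Real.sqrt (2 * Real.pi)) *
          Complex.exp (-(Complex.I) * κ * (h t)) * φ t) :
    ∀ φ : Lp ℂ 2 (volume.restrict (Set.Ioo 0 K)),
      F φ = L (T (ContinuousLinearMap.adjoint L φ)) := by
  obtain rfl : h = fun t => t + inner ℝ xhat (a t) := funext hh
  exact DFunLike.congr_fun (farFieldOperator_factorization_general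
    (aestronglyMeasurable_id_add_inner (ha.continuousOn.mono Set.Ioo_subset_Icc_self)
      measurableSet_Ioo xhat) _ κ hw hF hL hT)
end
end

section
/- Assume the function h(t) = t + x̂·a(t) is not constant on [t_min, t_max]. Then the adjoint L* : L²(0, K) → L²(t_min, t_max) of the data-to-pattern operator L is injective; equivalently, the range of L is dense in L²(0, K). -/
open MeasureTheory

noncomputable section

/-!
The adjoint acts by `(L*φ)(t) = F (h t)`, where `F z = ∫₀ᴷ exp (i s z) φ s ds` is an entire function
because `φ` lives on a bounded set. If `L*φ = 0`, then `F` vanishes on the image of `h`, a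
nondegenerate interval since `h` is continuous and nonconstant. By the identity theorem `F = 0`, and
`F` restricted to the real line is the Fourier transform of `φ`, so `φ = 0`. Density of the range of
`L` is the equality `(range L)ᗮ = ker L*`.
-/

open Complex Filter Topology
open scoped ComplexConjugate

section FourierUniqueness

variable {E : Type*} [NormedAddCommGroup E] [InnerProductSpace ℝ E] [MeasurableSpace E]
  {μ : Measure E}

lemma charFun_withDensity_ofReal {f : E → ℝ} (hf : AEMeasurable f μ) (x : E) :
    charFun (μ.withDensity fun s ↦ ENNReal.ofReal (f s)) x =
      ∫ s, cexp (inner ℝ s x * I) * (max (f s) 0 : ℝ) ∂μ := by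
  rw [charFun_apply, integral_withDensity_eq_integral_toReal_smul₀ hf.ennreal_ofReal (by simp)]
  simp only [ENNReal.toReal_ofReal', real_smul, mul_comm]

lemma integrable_cexp_inner_mul [OpensMeasurableSpace E] {f : E → ℂ} (hf : Integrable f μ) (x : E) :
    Integrable (fun s ↦ cexp (inner ℝ s x * I) * f s) μ :=
  hf.bdd_mul (c := 1) (by fun_prop) (by simp [norm_exp_ofReal_mul_I])

variable [CompleteSpace E] [SecondCountableTopology E] [BorelSpace E]

-- The positive and negative parts of `f` are densities of finite measures with the same
-- characteristic function.
lemma ae_eq_zero_of_forall_integral_cexp_inner_mul_ofReal_eq_zero {f : E → ℝ}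
    (hf : Integrable f μ) (h0 : ∀ x, ∫ s, cexp (inner ℝ s x * I) * f s ∂μ = 0) : f =ᵐ[μ] 0 := by
  have := isFiniteMeasure_withDensity_ofReal hf.hasFiniteIntegral
  have := isFiniteMeasure_withDensity_ofReal hf.neg.hasFiniteIntegral
  have hcharFun : charFun (μ.withDensity fun s ↦ ENNReal.ofReal (f s)) =
      charFun (μ.withDensity fun s ↦ ENNReal.ofReal ((-f) s)) := by
    ext x
    have hpos : Integrable (fun s ↦ cexp (inner ℝ s x * I) * (max (f s) 0 : ℝ)) μ :=
      integrable_cexp_inner_mul hf.pos_part.ofReal x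
    have hneg : Integrable (fun s ↦ cexp (inner ℝ s x * I) * (max ((-f) s) 0 : ℝ)) μ :=
      integrable_cexp_inner_mul hf.neg.pos_part.ofReal x
    rw [charFun_withDensity_ofReal hf.aemeasurable, charFun_withDensity_ofReal hf.neg.aemeasurable,
      ← sub_eq_zero, ← integral_sub hpos hneg, ← h0 x]
    congr with s
    rw [← mul_sub, ← ofReal_sub, Pi.neg_apply, max_zero_sub_eq_self]
  have hdensity := (withDensity_eq_iff hf.aemeasurable.ennreal_ofReal
    hf.neg.aemeasurable.ennreal_ofReal hf.lintegral_lt_top.ne).1 (Measure.ext_of_charFun hcharFun)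
  filter_upwards [hdensity] with s hs
  have hparts : max (f s) 0 = max (-f s) 0 := by
    simpa only [ENNReal.toReal_ofReal', Pi.neg_apply] using congrArg ENNReal.toReal hs
  exact (max_zero_sub_eq_self (f s)).symm.trans (sub_eq_zero.2 hparts)

lemma ae_eq_zero_of_forall_integral_cexp_inner_mul_eq_zero {f : E → ℂ}
    (hf : Integrable f μ) (h0 : ∀ x, ∫ s, cexp (inner ℝ s x * I) * f s ∂μ = 0) : f =ᵐ[μ] 0 := by
  have hconj (x : E) : ∫ s, cexp (inner ℝ s x * I) * conj (f s) ∂μ = 0 := by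
    rw [← map_zero conj, ← h0 (-x), ← integral_conj]
    congr with s
    simp [← exp_conj]
  have hf_conj : Integrable (fun s ↦ conj (f s)) μ := conjCLE.integrable_comp_iff.2 hf
  have hre : (fun s ↦ (f s).re) =ᵐ[μ] 0 := by
    refine ae_eq_zero_of_forall_integral_cexp_inner_mul_ofReal_eq_zero hf.re fun x ↦ ?_
    simp only [re_eq_add_conj, mul_div_assoc', mul_add, integral_div]
    rw [integral_add (integrable_cexp_inner_mul hf x) (integrable_cexp_inner_mul hf_conj x), h0,
      hconj]
    simp
  have him : (fun s ↦ (f s).im) =ᵐ[μ] 0 := by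
    refine ae_eq_zero_of_forall_integral_cexp_inner_mul_ofReal_eq_zero hf.im fun x ↦ ?_
    simp only [im_eq_sub_conj, mul_div_assoc', mul_sub, integral_div]
    rw [integral_sub (integrable_cexp_inner_mul hf x) (integrable_cexp_inner_mul hf_conj x), h0,
      hconj]
    simp
  filter_upwards [hre, him] with s hs_re hs_im using Complex.ext hs_re hs_im

end FourierUniqueness

lemma eq_zero_of_differentiable_of_eqOn_zero_of_isPreconnected {F : ℂ → ℂ}
    (hF : Differentiable ℂ F) {C : Set ℂ} (hC : IsPreconnected C) (hnt : C.Nontrivial)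
    (h0 : Set.EqOn F 0 C) : F = 0 := by
  obtain ⟨z₀, hz₀⟩ := hnt.nonempty
  have hacc : ∃ᶠ z in 𝓝[≠] z₀, z ∈ C :=
    accPt_iff_frequently_nhdsNE.1 (hC.preperfect_of_nontrivial hnt z₀ hz₀)
  exact AnalyticOnNhd.eq_of_frequently_eq (fun z _ ↦ hF.analyticAt z) analyticOnNhd_const
    (hacc.mono h0)

/-- The Fourier–Laplace transform `z ↦ ∫ exp (i s z) f s ∂ν` of the measure with density `f` with
respect to `ν`, at complex frequency `z`; for real `z` it is a Fourier transform, without the factor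
`-2π` of the Mathlib transform `𝓕`. -/
def fourierLaplace (ν : Measure ℝ) (f : ℝ → ℂ) (z : ℂ) : ℂ :=
  ∫ s, cexp (I * s * z) * f s ∂ν

section FourierLaplace

variable {ν : Measure ℝ} {f : ℝ → ℂ} {R : ℝ}

lemma norm_cexp_I_mul_ofReal_mul_le {s : ℝ} (hs : |s| ≤ R) (z : ℂ) :
    ‖cexp (I * s * z)‖ ≤ Real.exp (R * ‖z‖) := by
  refine (norm_exp_le_exp_norm _).trans (Real.exp_le_exp.2 ?_)
  simpa using mul_le_mul_of_nonneg_right hs (norm_nonneg z)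

lemma norm_cexp_mul_mul_le_of_mem_ball {s : ℝ} (hs : |s| ≤ R) {z z₀ : ℂ}
    (hz : z ∈ Metric.ball z₀ 1) (w : ℂ) :
    ‖cexp (I * s * z) * (I * s) * w‖ ≤ Real.exp (R * (‖z₀‖ + 1)) * R * ‖w‖ := by
  have hR : 0 ≤ R := (abs_nonneg s).trans hs
  have hz' : ‖z‖ ≤ ‖z₀‖ + 1 := by
    linarith [norm_le_norm_add_norm_sub' z z₀, mem_ball_iff_norm.1 hz]
  have hexp : ‖cexp (I * s * z)‖ ≤ Real.exp (R * (‖z₀‖ + 1)) :=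
    (norm_cexp_I_mul_ofReal_mul_le hs z).trans (by gcongr)
  have hIs : ‖I * (s : ℂ)‖ ≤ R := by simpa using hs
  rw [norm_mul, norm_mul]
  gcongr

lemma differentiable_fourierLaplace (hν : ∀ᵐ s ∂ν, |s| ≤ R) (hf : Integrable f ν) :
    Differentiable ℂ (fourierLaplace ν f) := by
  intro z₀
  have hexp (z : ℂ) : AEStronglyMeasurable (fun s : ℝ ↦ cexp (I * s * z)) ν := by fun_prop
  have hint : Integrable (fun s : ℝ ↦ cexp (I * s * z₀) * f s) ν :=
    hf.bdd_mul (hexp z₀) (hν.mono fun s hs ↦ norm_cexp_I_mul_ofReal_mul_le hs z₀)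
  have hderiv (s : ℝ) (z : ℂ) :
      HasDerivAt (fun z ↦ cexp (I * s * z) * f s) (cexp (I * s * z) * (I * s) * f s) z :=
    ((hasDerivAt_const_mul (I * (s : ℂ))).cexp).mul_const (f s)
  exact (hasDerivAt_integral_of_dominated_loc_of_deriv_le
    (Metric.ball_mem_nhds z₀ one_pos)
    (Eventually.of_forall fun z ↦ (hexp z).mul hf.1) hint
    (((hexp z₀).mul (by fun_prop)).mul hf.1)
    (hν.mono fun s hs z hz ↦ norm_cexp_mul_mul_le_of_mem_ball hs hz (f s))
    (hf.norm.const_mul _)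
    (Eventually.of_forall fun s z _ ↦ hderiv s z)).2.differentiableAt

lemma ae_eq_zero_of_fourierLaplace_eq_zero (hf : Integrable f ν) (h0 : fourierLaplace ν f = 0) :
    f =ᵐ[ν] 0 := by
  refine ae_eq_zero_of_forall_integral_cexp_inner_mul_eq_zero hf fun x ↦ ?_
  refine Eq.trans ?_ (congrFun h0 x)
  simp only [fourierLaplace, RCLike.inner_apply, conj_trivial, ofReal_mul]
  congr with s
  ring_nf

end FourierLaplace

section Adjoint

open ContinuousLinearMap

variable {𝕜 : Type*} [RCLike 𝕜]

lemma denseRange_of_injective_adjoint {E F : Type*} [NormedAddCommGroup E] [InnerProductSpace 𝕜 E]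
    [CompleteSpace E] [NormedAddCommGroup F] [InnerProductSpace 𝕜 F] [CompleteSpace F]
    {T : E →L[𝕜] F} (hT : Function.Injective (adjoint T)) : DenseRange T := by
  have hperp : T.rangeᗮ = ⊥ := by
    rw [orthogonal_range]
    exact LinearMap.ker_eq_bot.2 hT
  exact Submodule.dense_iff_topologicalClosure_eq_top.2
    (Submodule.topologicalClosure_eq_top_iff.2 hperp)

variable {α β : Type*} [MeasurableSpace α] [MeasurableSpace β] {μ : Measure α} {ν : Measure β}

lemma integrable_conj_kernel_mul_restrict [SFinite μ] {k : β → α → 𝕜}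
    (hk : MemLp (Function.uncurry k) 2 (ν.prod μ)) {φ : β → 𝕜} (hφ : MemLp φ 2 ν) {s : Set α}
    (hs : μ s < ⊤) :
    Integrable (Function.uncurry fun y x ↦ conj (k y x) * φ y) (ν.prod (μ.restrict s)) := by
  have : IsFiniteMeasure (μ.restrict s) := isFiniteMeasure_restrict.2 hs.ne
  have hk_restrict : MemLp (Function.uncurry k) 2 (ν.prod (μ.restrict s)) :=
    hk.mono_measure (Measure.prod_mono le_rfl Measure.restrict_le_self)
  exact hk_restrict.star.integrable_mul (hφ.comp_fst (μ.restrict s))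

-- Testing `adjoint L φ` against indicators of sets of finite measure avoids having to know
-- beforehand that the right-hand side is in `L²`.
theorem adjoint_ae_eq_integral_conj_kernel [SigmaFinite μ] [SFinite ν] {k : β → α → 𝕜}
    (hk : MemLp (Function.uncurry k) 2 (ν.prod μ)) {L : Lp 𝕜 2 μ →L[𝕜] Lp 𝕜 2 ν}
    (hL : ∀ ψ : Lp 𝕜 2 μ, L ψ =ᵐ[ν] fun y ↦ ∫ x, k y x * ψ x ∂μ) (φ : Lp 𝕜 2 ν) :
    adjoint L φ =ᵐ[μ] fun x ↦ ∫ y, conj (k y x) * φ y ∂ν := by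
  refine ae_eq_of_forall_setIntegral_eq_of_sigmaFinite
    (fun s _ hμs ↦ integrableOn_Lp_of_measure_ne_top _ one_le_two hμs.ne)
    (fun s _ hμs ↦ (integrable_conj_kernel_mul_restrict hk (Lp.memLp φ) hμs).integral_prod_right)
    fun s hs hμs ↦ ?_
  have hL_indicator : L (indicatorConstLp 2 hs hμs.ne 1) =ᵐ[ν] fun y ↦ ∫ x in s, k y x ∂μ := by
    filter_upwards [hL (indicatorConstLp 2 hs hμs.ne 1)] with y hy
    rw [hy, ← integral_indicator hs]
    refine integral_congr_ae ?_
    filter_upwards [indicatorConstLp_coeFn (μ := μ) (p := 2) (hs := hs) (hμs := hμs.ne)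
      (c := (1 : 𝕜))] with x hx
    by_cases hxs : x ∈ s <;> simp [hx, hxs]
  calc ∫ x in s, adjoint L φ x ∂μ
      = inner 𝕜 (L (indicatorConstLp 2 hs hμs.ne 1)) φ := by
        rw [← L2.inner_indicatorConstLp_one hs hμs.ne, adjoint_inner_right]
    _ = ∫ y, ∫ x in s, conj (k y x) * φ y ∂μ ∂ν := by
        rw [L2.inner_def]
        refine integral_congr_ae ?_
        filter_upwards [hL_indicator] with y hy
        rw [hy, RCLike.inner_apply, ← integral_conj, integral_mul_const, mul_comm]
    _ = ∫ x in s, ∫ y, conj (k y x) * φ y ∂ν ∂μ :=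
        integral_integral_swap (integrable_conj_kernel_mul_restrict hk (Lp.memLp φ) hμs)

end Adjoint

lemma nontrivial_image_of_nontrivial_image_closure {X Y : Type*} [TopologicalSpace X]
    [TopologicalSpace Y] [T1Space Y] {f : X → Y} {s : Set X} (hf : ContinuousOn f (closure s))
    (hnt : (f '' closure s).Nontrivial) : (f '' s).Nontrivial := by
  by_contra hsub
  exact hnt.not_subsingleton
    ((Set.not_nontrivial_iff.1 hsub).closure.anti hf.image_closure)

lemma nontrivial_image_Ioo_of_exists_ne {X Y : Type*} [LinearOrder X] [DenselyOrdered X]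
    [TopologicalSpace X] [OrderTopology X] [TopologicalSpace Y] [T1Space Y] {f : X → Y} {a b : X}
    (hf : ContinuousOn f (Set.Icc a b))
    (hne : ∃ x ∈ Set.Icc a b, ∃ y ∈ Set.Icc a b, f x ≠ f y) : (f '' Set.Ioo a b).Nontrivial := by
  obtain ⟨x, hx, y, hy, hxy⟩ := hne
  have hab : a ≠ b := by
    rintro rfl
    exact hxy (congrArg f (Set.subsingleton_Icc_of_ge le_rfl hx hy))
  rw [← closure_Ioo hab] at hf hx hy
  exact nontrivial_image_of_nontrivial_image_closure hf
    ⟨f x, Set.mem_image_of_mem f hx, f y, Set.mem_image_of_mem f hy, hxy⟩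

lemma ae_restrict_Ioo_zero_abs_le (μ : Measure ℝ) (R : ℝ) :
    ∀ᵐ s ∂μ.restrict (Set.Ioo 0 R), |s| ≤ R :=
  ae_restrict_of_forall_mem measurableSet_Ioo fun _ hs ↦ (abs_of_pos hs.1).trans_le hs.2.le

section DataToPattern

open ContinuousLinearMap

variable {X : Type*} [MeasurableSpace X] {μ : Measure X} {ν : Measure ℝ} {h : X → ℝ}

lemma memLp_uncurry_dataToPattern_kernel [IsFiniteMeasure μ] [IsFiniteMeasure ν]
    (hh : AEMeasurable h μ) (p : ENNReal) :
    MemLp (Function.uncurry fun (τ : ℝ) t ↦ cexp (-I * τ * h t)) p (ν.prod μ) := by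
  refine MemLp.of_bound ?_ 1 (Eventually.of_forall fun z ↦ ?_)
  · have : AEMeasurable (fun z : ℝ × X ↦ h z.2) (ν.prod μ) := hh.comp_snd
    exact AEMeasurable.aestronglyMeasurable (by fun_prop)
  · simp [Function.uncurry, norm_exp]

lemma adjoint_dataToPattern_ae_eq_fourierLaplace [IsFiniteMeasure μ] [IsFiniteMeasure ν]
    (hh : AEMeasurable h μ) {L : Lp ℂ 2 μ →L[ℂ] Lp ℂ 2 ν}
    (hL : ∀ ψ : Lp ℂ 2 μ, L ψ =ᵐ[ν] fun τ ↦ ∫ t, cexp (-I * τ * h t) * ψ t ∂μ)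
    (φ : Lp ℂ 2 ν) : adjoint L φ =ᵐ[μ] fun t ↦ fourierLaplace ν φ (h t) := by
  filter_upwards [adjoint_ae_eq_integral_conj_kernel (memLp_uncurry_dataToPattern_kernel hh 2) hL φ]
    with t ht
  simp [ht, fourierLaplace, ← exp_conj]

theorem adjoint_dataToPattern_injective_denseRange_general [TopologicalSpace X]
    [OpensMeasurableSpace X] [μ.IsOpenPosMeasure] {s : Set X} (hs_open : IsOpen s)
    (hs_conn : IsPreconnected s) [IsFiniteMeasure (μ.restrict s)] [IsFiniteMeasure ν] {R : ℝ}
    (hν : ∀ᵐ τ ∂ν, |τ| ≤ R) (hh : ContinuousOn h s) (hnc : (h '' s).Nontrivial)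
    (L : Lp ℂ 2 (μ.restrict s) →L[ℂ] Lp ℂ 2 ν)
    (hL : ∀ ψ : Lp ℂ 2 (μ.restrict s),
      L ψ =ᵐ[ν] fun τ ↦ ∫ t in s, cexp (-I * τ * h t) * ψ t ∂μ) :
    Function.Injective (adjoint L) ∧ DenseRange L := by
  suffices hinj : Function.Injective (adjoint L) from ⟨hinj, denseRange_of_injective_adjoint hinj⟩
  refine (injective_iff_map_eq_zero _).2 fun φ hφ ↦ ?_
  have hφ_int : Integrable φ ν := (Lp.memLp φ).integrable one_le_two
  have hF : Differentiable ℂ (fourierLaplace ν φ) := differentiable_fourierLaplace hν hφ_int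
  have hh_coe : ContinuousOn (fun t ↦ (h t : ℂ)) s := continuous_ofReal.comp_continuousOn hh
  have hF_ae : (fun t ↦ fourierLaplace ν φ (h t)) =ᵐ[μ.restrict s] 0 :=
    (adjoint_dataToPattern_ae_eq_fourierLaplace (hh.aemeasurable hs_open.measurableSet) hL
      φ).symm.trans (hφ ▸ Lp.coeFn_zero ℂ 2 (μ.restrict s))
  have hF_eqOn : Set.EqOn (fun t ↦ fourierLaplace ν φ (h t)) 0 s :=
    Measure.eqOn_open_of_ae_eq hF_ae hs_open (hF.continuous.comp_continuousOn hh_coe)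
      continuousOn_const
  have hF_zero : fourierLaplace ν φ = 0 := by
    refine eq_zero_of_differentiable_of_eqOn_zero_of_isPreconnected hF (hs_conn.image _ hh_coe) ?_
      (Set.forall_mem_image.2 hF_eqOn)
    simpa only [Set.image_image] using hnc.image ofReal_injective
  exact Lp.eq_zero_iff_ae_eq_zero.2 (ae_eq_zero_of_fourierLaplace_eq_zero hφ_int hF_zero)

end DataToPattern

/-- If `h(t) = t + x̂·a(t)` is not constant on `[t_min, t_max]`, then the
adjoint `L*` of the data-to-pattern operator `L` is injective; equivalently, the range of `L`
is dense in `L²(0,K)`. -/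
theorem adjoint_dataToPattern_injective_denseRange
    {d : ℕ} (hd : d = 2 ∨ d = 3)
    (tmin tmax : ℝ) (htmin : 0 < tmin) (htt : tmin < tmax)
    (K : ℝ) (hK : 0 < K)
    (a : ℝ → EuclideanSpace ℝ (Fin d))
    (ha : ContDiffOn ℝ 1 a (Set.Icc tmin tmax))
    (xhat : EuclideanSpace ℝ (Fin d)) (hxhat : ‖xhat‖ = 1)
    (h : ℝ → ℝ) (hh : ∀ t, h t = t + inner ℝ xhat (a t))
    (hnc : ∃ t ∈ Set.Icc tmin tmax, ∃ s ∈ Set.Icc tmin tmax, h t ≠ h s)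
    (L : Lp ℂ 2 (volume.restrict (Set.Ioo tmin tmax)) →L[ℂ]
         Lp ℂ 2 (volume.restrict (Set.Ioo 0 K)))
    (hL : ∀ ψ : Lp ℂ 2 (volume.restrict (Set.Ioo tmin tmax)),
      (L ψ : ℝ → ℂ) =ᵐ[volume.restrict (Set.Ioo 0 K)]
        fun τ => ∫ t in Set.Ioo tmin tmax,
          Complex.exp (-(Complex.I) * τ * (h t)) * ψ t) :
    Function.Injective (ContinuousLinearMap.adjoint L) ∧ DenseRange L := by
  have hc : ContinuousOn h (Set.Icc tmin tmax) :=
    funext hh ▸ continuousOn_id.add (continuousOn_const.inner ha.continuousOn)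
  exact adjoint_dataToPattern_injective_denseRange_general isOpen_Ioo isPreconnected_Ioo
    (ae_restrict_Ioo_zero_abs_le volume K) (hc.mono Set.Ioo_subset_Icc_self)
    (nontrivial_image_Ioo_of_exists_ne hc hnc) L hL
end
end

section
/- Let a, b : [t_min, t_max] → ℝ^d be continuously differentiable orbit functions, set h_a(t) = t + x̂·a(t) and h_b(t) = t + x̂·b(t), and assume the closed intervals [inf h_a, sup h_a] and [inf h_b, sup h_b] (infima and suprema over [t_min, t_max]) are disjoint. Let L_a^{(x̂)} and L_b^{(x̂)} be the data-to-pattern operators associated with a and b respectively. Then Range(L_a^{(x̂)}) ∩ Range(L_b^{(x̂)}) = {0} in L²(0, K). -/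
open MeasureTheory

noncomputable section

/-!
Suppose `L_a φ = L_b ψ` with, say, `sup h_a < inf h_b`. Both sides extend to entire functions of the
frequency `τ`, and these agree on all of `ℂ` because they agree almost everywhere on `(0, K)`.
Writing `y` for the imaginary part of `τ`, the common extension `F` is `O(exp (y * sup h_a))` in the
upper half-plane, by the formula for `L_a φ`, and `O(exp (y * inf h_b))` in the lower half-plane, by
the formula for `L_b ψ`. Hence `exp (i τ inf h_b) F(τ)` is bounded and tends to `0` along the
positive imaginary axis, so it vanishes by Liouville's theorem.
-/

open Complex Filter Set Topology

theorem lt_or_lt_of_disjoint_Icc {γ : Type*} [LinearOrder γ] {u₁ v₁ u₂ v₂ : γ}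
    (hdisj : Disjoint (Icc u₁ v₁) (Icc u₂ v₂)) (h₁ : u₁ ≤ v₁) (h₂ : u₂ ≤ v₂) :
    v₁ < u₂ ∨ v₂ < u₁ := by
  by_contra! hle
  have mem_left : max u₁ u₂ ∈ Icc u₁ v₁ := ⟨le_max_left _ _, max_le h₁ hle.1⟩
  have mem_right : max u₁ u₂ ∈ Icc u₂ v₂ := ⟨le_max_right _ _, max_le hle.2 h₂⟩
  exact disjoint_left.1 hdisj mem_left mem_right

theorem norm_cexp_neg_I_mul_mul_ofReal (z : ℂ) (r : ℝ) :
    ‖cexp (-I * z * r)‖ = Real.exp (z.im * r) := by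
  simp [norm_exp]

theorem norm_cexp_neg_I_mul_mul_ofReal_le {z : ℂ} {r R M : ℝ} (hz : ‖z‖ ≤ R) (hr : |r| ≤ M) :
    ‖cexp (-I * z * r)‖ ≤ Real.exp (R * M) := by
  rw [norm_cexp_neg_I_mul_mul_ofReal, Real.exp_le_exp]
  calc z.im * r ≤ |z.im| * |r| := (le_abs_self _).trans_eq (abs_mul _ _)
    _ ≤ R * M := mul_le_mul ((abs_im_le_norm z).trans hz) hr (abs_nonneg _)
      ((norm_nonneg z).trans hz)

section EntireFunctions

variable {E : Type*} [NormedAddCommGroup E] [NormedSpace ℂ E] {F G : ℂ → E}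

theorem countable_setOf_eq_of_differentiable [CompleteSpace E] (hF : Differentiable ℂ F)
    (hG : Differentiable ℂ G) (hne : F ≠ G) : {z | F z = G z}.Countable := by
  obtain ⟨w, hw⟩ := Function.ne_iff.1 hne
  have zeros_compl_codiscrete : (F - G) ⁻¹' {0}ᶜ ∈ codiscrete ℂ :=
    AnalyticOnNhd.preimage_zero_mem_codiscrete (fun z _ ↦ (hF.sub hG).analyticAt z)
      (sub_ne_zero.2 hw)
  have zeros_discrete : IsDiscrete ((F - G) ⁻¹' {0}) := by
    simpa using (mem_codiscrete'.1 zeros_compl_codiscrete).2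
  simpa [preimage, sub_eq_zero] using
    (HereditarilyLindelofSpace.isLindelof _).countable_of_isDiscrete zeros_discrete

theorem eq_of_ae_eq_ofReal_of_differentiable [CompleteSpace E] {ν : Measure ℝ}
    [NullSingletonClass ν] (hν : ν ≠ 0) (hF : Differentiable ℂ F) (hG : Differentiable ℂ G)
    (heq : ∀ᵐ τ : ℝ ∂ν, F τ = G τ) : F = G := by
  by_contra hne
  have eq_countable : {τ : ℝ | F τ = G τ}.Countable :=
    (countable_setOf_eq_of_differentiable hF hG hne).preimage ofReal_injective
  have ae_ne : ∀ᵐ τ : ℝ ∂ν, F τ ≠ G τ := eq_countable.ae_notMem ν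
  have : (ae ν).NeBot := ae_neBot.2 hν
  obtain ⟨τ, h_eq, h_ne⟩ := (heq.and ae_ne).exists
  exact h_ne h_eq

theorem eq_zero_of_isBounded_range_of_tendsto {ι : Type*} {l : Filter ι} [l.NeBot] {γ : ι → ℂ}
    (hF : Differentiable ℂ F) (hbdd : Bornology.IsBounded (range F))
    (hlim : Tendsto (fun i ↦ F (γ i)) l (𝓝 0)) : F = 0 := by
  funext z
  exact tendsto_nhds_unique
    (tendsto_const_nhds.congr fun i ↦ hF.apply_eq_apply_of_bounded hbdd z (γ i)) hlim

theorem eq_zero_of_norm_le_exp_im {s t A B : ℝ} (hst : s < t) (hF : Differentiable ℂ F)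
    (upper : ∀ z, 0 ≤ z.im → ‖F z‖ ≤ Real.exp (z.im * s) * A)
    (lower : ∀ z, z.im ≤ 0 → ‖F z‖ ≤ Real.exp (z.im * t) * B) : F = 0 := by
  set H : ℂ → E := fun z ↦ cexp (I * z * t) • F z with hH
  have norm_H (z : ℂ) : ‖H z‖ = Real.exp (-(z.im * t)) * ‖F z‖ := by
    simp [hH, norm_smul, norm_exp]
  have H_diff : Differentiable ℂ H := by fun_prop
  have H_upper (z : ℂ) (hz : 0 ≤ z.im) : ‖H z‖ ≤ Real.exp (-((t - s) * z.im)) * A := calc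
    ‖H z‖ ≤ Real.exp (-(z.im * t)) * (Real.exp (z.im * s) * A) := by
      rw [norm_H]; gcongr; exact upper z hz
    _ = Real.exp (-((t - s) * z.im)) * A := by
      rw [← mul_assoc, ← Real.exp_add]; ring_nf
  have H_lower (z : ℂ) (hz : z.im ≤ 0) : ‖H z‖ ≤ B := calc
    ‖H z‖ ≤ Real.exp (-(z.im * t)) * (Real.exp (z.im * t) * B) := by
      rw [norm_H]; gcongr; exact lower z hz
    _ = B := by rw [← mul_assoc, ← Real.exp_add]; simp
  have A_nonneg : 0 ≤ A := by simpa using (norm_nonneg _).trans (upper 0 le_rfl)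
  have H_bounded : Bornology.IsBounded (range H) := by
    refine isBounded_iff_forall_norm_le.2 ⟨max A B, forall_mem_range.2 fun z ↦ ?_⟩
    rcases le_total 0 z.im with hz | hz
    · refine le_max_of_le_left ((H_upper z hz).trans (mul_le_of_le_one_left A_nonneg ?_))
      exact Real.exp_le_one_iff.2 (neg_nonpos.2 (mul_nonneg (sub_pos.2 hst).le hz))
    · exact le_max_of_le_right (H_lower z hz)
  have H_tendsto : Tendsto (fun y : ℝ ↦ H (y * I)) atTop (𝓝 0) := by
    have decay : Tendsto (fun y : ℝ ↦ Real.exp (-((t - s) * y)) * A) atTop (𝓝 0) := by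
      simpa using (Real.tendsto_exp_neg_atTop_nhds_zero.comp
        (tendsto_id.const_mul_atTop (sub_pos.2 hst))).mul_const A
    refine squeeze_zero_norm' ((eventually_ge_atTop 0).mono fun y hy ↦ ?_) decay
    simpa using H_upper (y * I) (by simpa using hy)
  have H_zero : H = 0 := eq_zero_of_isBounded_range_of_tendsto H_diff H_bounded H_tendsto
  funext z
  exact (smul_eq_zero.1 (congrFun H_zero z)).resolve_left (exp_ne_zero _)

end EntireFunctions

/-- The data-to-pattern transform `z ↦ ∫ exp (-i z h(t)) φ(t) dμ(t)` of a density `φ` with phase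
`h`, taken at an arbitrary complex frequency `z`; its restriction to real `z` is `L_a φ` when `h` is
the phase `h_a`. -/
def phaseIntegral {α E : Type*} [MeasurableSpace α] [NormedAddCommGroup E] [NormedSpace ℂ E]
    (μ : Measure α) (h : α → ℝ) (φ : α → E) (z : ℂ) : E :=
  ∫ t, cexp (-I * z * h t) • φ t ∂μ

section PhaseIntegral

variable {α β E : Type*} [MeasurableSpace α] [MeasurableSpace β] [NormedAddCommGroup E]
  [NormedSpace ℂ E] {μ : Measure α} {h : α → ℝ} {φ : α → E}

theorem norm_phaseIntegral_le (hφ : Integrable φ μ) {z : ℂ} {C : ℝ}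
    (hC : ∀ᵐ t ∂μ, z.im * h t ≤ C) :
    ‖phaseIntegral μ h φ z‖ ≤ Real.exp C * ∫ t, ‖φ t‖ ∂μ := by
  rw [← integral_const_mul]
  refine norm_integral_le_of_norm_le (hφ.norm.const_mul _) ?_
  filter_upwards [hC] with t ht
  rw [norm_smul, norm_cexp_neg_I_mul_mul_ofReal]
  gcongr

theorem differentiable_phaseIntegral (hh : AEMeasurable h μ) {M : ℝ}
    (hM : ∀ᵐ t ∂μ, |h t| ≤ M) (hφ : Integrable φ μ) :
    Differentiable ℂ (phaseIntegral μ h φ) := by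
  intro z
  have integrand_meas (w : ℂ) : AEStronglyMeasurable (fun t ↦ cexp (-I * w * h t) • φ t) μ :=
    AEStronglyMeasurable.smul (by fun_prop) hφ.aestronglyMeasurable
  have integrand_integrable : Integrable (fun t ↦ cexp (-I * z * h t) • φ t) μ :=
    hφ.bdd_smul (Real.exp (‖z‖ * M)) (by fun_prop)
      (hM.mono fun t ht ↦ norm_cexp_neg_I_mul_mul_ofReal_le le_rfl ht)
  have deriv_bound : ∀ᵐ t ∂μ, ∀ w ∈ Metric.ball z 1,
      ‖(-I * h t) • cexp (-I * w * h t) • φ t‖ ≤ M * (Real.exp ((‖z‖ + 1) * M) * ‖φ t‖) := by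
    filter_upwards [hM] with t ht w hw
    have hw_norm : ‖w‖ ≤ ‖z‖ + 1 := (norm_lt_of_mem_ball hw).le
    have hM_nonneg : 0 ≤ M := (abs_nonneg _).trans ht
    rw [norm_smul, norm_smul]
    gcongr
    · simpa using ht
    · exact norm_cexp_neg_I_mul_mul_ofReal_le hw_norm ht
  have integrand_hasDerivAt (t : α) (w : ℂ) :
      HasDerivAt (fun w ↦ cexp (-I * w * h t) • φ t)
        ((-I * h t) • cexp (-I * w * h t) • φ t) w := by
    have phase_deriv : HasDerivAt (fun w : ℂ ↦ -I * w * h t) (-I * h t) w := by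
      simpa using ((hasDerivAt_id w).const_mul (-I)).mul_const (h t : ℂ)
    simpa only [smul_smul, mul_comm] using phase_deriv.cexp.smul_const (φ t)
  exact (hasDerivAt_integral_of_dominated_loc_of_deriv_le (Metric.ball_mem_nhds z one_pos)
    (.of_forall integrand_meas) integrand_integrable
    (AEStronglyMeasurable.smul (by fun_prop) (integrand_meas z)) deriv_bound
    ((hφ.norm.const_mul _).const_mul _)
    (.of_forall fun t w _ ↦ integrand_hasDerivAt t w)).2.differentiableAt

theorem differentiable_phaseIntegral_of_mem_Icc {u v : ℝ} (hh : AEMeasurable h μ)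
    (hmem : ∀ᵐ t ∂μ, h t ∈ Icc u v) (hφ : Integrable φ μ) :
    Differentiable ℂ (phaseIntegral μ h φ) :=
  differentiable_phaseIntegral hh
    (hmem.mono fun _ ht ↦ abs_le_max_abs_abs ht.1 ht.2) hφ

variable {ν : Measure β} {k : β → ℝ} {ψ : β → E} {u₁ v₁ u₂ v₂ : ℝ}

theorem phaseIntegral_eq_zero_of_eq_of_lt (hlt : v₁ < u₂) (hh : AEMeasurable h μ)
    (hmem : ∀ᵐ t ∂μ, h t ∈ Icc u₁ v₁) (hk_ge : ∀ᵐ t ∂ν, u₂ ≤ k t)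
    (hφ : Integrable φ μ) (hψ : Integrable ψ ν)
    (heq : phaseIntegral μ h φ = phaseIntegral ν k ψ) : phaseIntegral μ h φ = 0 := by
  refine eq_zero_of_norm_le_exp_im hlt (differentiable_phaseIntegral_of_mem_Icc hh hmem hφ)
    (fun z hz ↦ norm_phaseIntegral_le hφ ?_) (fun z hz ↦ heq ▸ norm_phaseIntegral_le hψ ?_)
  · exact hmem.mono fun t ht ↦ mul_le_mul_of_nonneg_left ht.2 hz
  · exact hk_ge.mono fun t ht ↦ mul_le_mul_of_nonpos_left ht hz

theorem phaseIntegral_eq_zero_of_eq_of_disjoint (hdisj : Disjoint (Icc u₁ v₁) (Icc u₂ v₂))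
    (hh : AEMeasurable h μ) (hk : AEMeasurable k ν) (hmem : ∀ᵐ t ∂μ, h t ∈ Icc u₁ v₁)
    (kmem : ∀ᵐ t ∂ν, k t ∈ Icc u₂ v₂) (hφ : Integrable φ μ) (hψ : Integrable ψ ν)
    (heq : phaseIntegral μ h φ = phaseIntegral ν k ψ) : phaseIntegral μ h φ = 0 := by
  rcases eq_zero_or_neZero μ with rfl | hμ
  · funext z
    simp [phaseIntegral]
  rcases eq_zero_or_neZero ν with rfl | hν
  · rw [heq]
    funext z
    simp [phaseIntegral]
  obtain ⟨t₁, ht₁⟩ := hmem.exists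
  obtain ⟨t₂, ht₂⟩ := kmem.exists
  rcases lt_or_lt_of_disjoint_Icc hdisj (ht₁.1.trans ht₁.2) (ht₂.1.trans ht₂.2) with hlt | hlt
  · exact phaseIntegral_eq_zero_of_eq_of_lt hlt hh hmem (kmem.mono fun _ ht ↦ ht.1) hφ hψ heq
  · exact heq.trans
      (phaseIntegral_eq_zero_of_eq_of_lt hlt hk kmem (hmem.mono fun _ ht ↦ ht.1) hψ hφ heq.symm)

end PhaseIntegral

open scoped ENNReal in
theorem ranges_dataToPattern_disjoint_general {α β E : Type*} [MeasurableSpace α]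
    [MeasurableSpace β] [NormedAddCommGroup E] [NormedSpace ℂ E] [CompleteSpace E]
    {μ : Measure α} {ν : Measure β} [IsFiniteMeasure μ] [IsFiniteMeasure ν]
    {ρ : Measure ℝ} [NullSingletonClass ρ] (hρ : ρ ≠ 0)
    {p q r : ℝ≥0∞} [Fact (1 ≤ p)] [Fact (1 ≤ q)] [Fact (1 ≤ r)]
    {h : α → ℝ} {k : β → ℝ} (hh : AEMeasurable h μ) (hk : AEMeasurable k ν)
    {u₁ v₁ u₂ v₂ : ℝ} (hmem : ∀ᵐ t ∂μ, h t ∈ Icc u₁ v₁) (kmem : ∀ᵐ t ∂ν, k t ∈ Icc u₂ v₂)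
    (hdisj : Disjoint (Icc u₁ v₁) (Icc u₂ v₂))
    (La : Lp E p μ →L[ℂ] Lp E r ρ) (Lb : Lp E q ν →L[ℂ] Lp E r ρ)
    (hLa : ∀ φ, La φ =ᵐ[ρ] fun τ : ℝ ↦ phaseIntegral μ h φ τ)
    (hLb : ∀ ψ, Lb ψ =ᵐ[ρ] fun τ : ℝ ↦ phaseIntegral ν k ψ τ) :
    range La ∩ range Lb = {0} := by
  refine eq_singleton_iff_unique_mem.2 ⟨⟨⟨0, map_zero La⟩, ⟨0, map_zero Lb⟩⟩, ?_⟩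
  rintro _ ⟨⟨φ, rfl⟩, ⟨ψ, hψφ⟩⟩
  have hφ : Integrable φ μ := (Lp.memLp φ).integrable Fact.out
  have hψ : Integrable ψ ν := (Lp.memLp ψ).integrable Fact.out
  have heq : phaseIntegral μ h φ = phaseIntegral ν k ψ :=
    eq_of_ae_eq_ofReal_of_differentiable hρ (differentiable_phaseIntegral_of_mem_Icc hh hmem hφ)
      (differentiable_phaseIntegral_of_mem_Icc hk kmem hψ)
      ((hLa φ).symm.trans (hψφ ▸ hLb ψ))
  rw [Lp.eq_zero_iff_ae_eq_zero]
  filter_upwards [hLa φ] with τ hτ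
  rw [hτ, phaseIntegral_eq_zero_of_eq_of_disjoint hdisj hh hk hmem kmem hφ hψ heq]
  rfl

section Orbits

variable {E : Type*} [NormedAddCommGroup E] [InnerProductSpace ℝ E] {a : ℝ → E} {s : Set ℝ}
  {h : ℝ → ℝ}

theorem continuousOn_orbit_phase (ha : ContinuousOn a s) (x : E)
    (hh : ∀ t, h t = t + inner ℝ x (a t)) : ContinuousOn h s := by
  rw [funext hh]
  fun_prop

variable {u v : ℝ}

theorem aemeasurable_restrict_Ioo_of_continuousOn_Icc (hh : ContinuousOn h (Icc u v)) :
    AEMeasurable h (volume.restrict (Ioo u v)) :=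
  (hh.mono Ioo_subset_Icc_self).aemeasurable measurableSet_Ioo

theorem ae_mem_Icc_sInf_sSup_of_continuousOn_Icc (hh : ContinuousOn h (Icc u v)) :
    ∀ᵐ t ∂volume.restrict (Ioo u v), h t ∈ Icc (sInf (h '' Icc u v)) (sSup (h '' Icc u v)) := by
  have image_compact : IsCompact (h '' Icc u v) := isCompact_Icc.image_of_continuousOn hh
  filter_upwards [ae_restrict_mem measurableSet_Ioo] with t ht
  have ht_image : h t ∈ h '' Icc u v := mem_image_of_mem h (Ioo_subset_Icc_self ht)
  exact ⟨csInf_le image_compact.bddBelow ht_image, le_csSup image_compact.bddAbove ht_image⟩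

end Orbits

/-- Let `a, b` be C¹ orbit functions with `h_a(t) = t + x̂·a(t)`,
`h_b(t) = t + x̂·b(t)`, and assume the closed intervals `[inf h_a, sup h_a]` and
`[inf h_b, sup h_b]` are disjoint. Then the ranges of the associated data-to-pattern
operators intersect trivially: `Range(L_a^{(x̂)}) ∩ Range(L_b^{(x̂)}) = {0}` in `L²(0,K)`. -/
theorem ranges_dataToPattern_disjoint
    {d : ℕ} (hd : d = 2 ∨ d = 3)
    (tmin tmax : ℝ) (htmin : 0 < tmin) (htt : tmin < tmax)
    (K : ℝ) (hK : 0 < K)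
    (a b : ℝ → EuclideanSpace ℝ (Fin d))
    (ha : ContDiffOn ℝ 1 a (Set.Icc tmin tmax))
    (hb : ContDiffOn ℝ 1 b (Set.Icc tmin tmax))
    (xhat : EuclideanSpace ℝ (Fin d)) (hxhat : ‖xhat‖ = 1)
    (hA hB : ℝ → ℝ)
    (hhA : ∀ t, hA t = t + inner ℝ xhat (a t))
    (hhB : ∀ t, hB t = t + inner ℝ xhat (b t))
    (hdisj : Disjoint
      (Set.Icc (sInf (hA '' Set.Icc tmin tmax)) (sSup (hA '' Set.Icc tmin tmax)))
      (Set.Icc (sInf (hB '' Set.Icc tmin tmax)) (sSup (hB '' Set.Icc tmin tmax))))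
    (La Lb : Lp ℂ 2 (volume.restrict (Set.Ioo tmin tmax)) →L[ℂ]
         Lp ℂ 2 (volume.restrict (Set.Ioo 0 K)))
    (hLa : ∀ ψ : Lp ℂ 2 (volume.restrict (Set.Ioo tmin tmax)),
      (La ψ : ℝ → ℂ) =ᵐ[volume.restrict (Set.Ioo 0 K)]
        fun τ => ∫ t in Set.Ioo tmin tmax,
          Complex.exp (-(Complex.I) * τ * (hA t)) * ψ t)
    (hLb : ∀ ψ : Lp ℂ 2 (volume.restrict (Set.Ioo tmin tmax)),
      (Lb ψ : ℝ → ℂ) =ᵐ[volume.restrict (Set.Ioo 0 K)]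
        fun τ => ∫ t in Set.Ioo tmin tmax,
          Complex.exp (-(Complex.I) * τ * (hB t)) * ψ t) :
    Set.range ⇑La ∩ Set.range ⇑Lb = {0} := by
  have cA := continuousOn_orbit_phase ha.continuousOn xhat hhA
  have cB := continuousOn_orbit_phase hb.continuousOn xhat hhB
  exact ranges_dataToPattern_disjoint_general (by simpa using hK)
    (aemeasurable_restrict_Ioo_of_continuousOn_Icc cA)
    (aemeasurable_restrict_Ioo_of_continuousOn_Icc cB)
    (ae_mem_Icc_sInf_sSup_of_continuousOn_Icc cA)
    (ae_mem_Icc_sInf_sSup_of_continuousOn_Icc cB) hdisj La Lb hLa hLb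
end
end

section
/- If there exist y ∈ ℝ^d and ψ ∈ L²(t_min, t_max) such that L^{(x̂)}ψ = φ_y^{(x̂)} in L²(0, K), then ξ_max − ξ_min ≥ T. -/
open MeasureTheory

noncomputable section

/-!
For a bounded phase `h`, the function `z ↦ ∫ exp (z h t) ψ t dt` is entire, so equality of the
pattern with the test function on the short imaginary segment `z = -iτ`, `0 < τ < K`, propagates to
the real axis. There the left side grows at most like `exp (s sup h)` as `s → ∞` and like
`exp (s inf h)` as `s → -∞`, while the right side is the moment generating function of `x̂·y + t`
for `t` uniform on `(t_min, t_max)`. By Chernoff's bound the interval `x̂·y + (t_min, t_max)`, of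
length `T`, lies up to a null set in `[inf h, sup h]`.
-/

open ProbabilityTheory Set Filter Complex
open scoped Topology

lemma frequently_eq_of_eqOn_ofReal_Ioo {F : Type*} {f g : ℂ → F} {a b : ℝ} (hab : a < b)
    (hfg : EqOn (fun x : ℝ ↦ f x) (fun x : ℝ ↦ g x) (Ioo a b)) :
    ∃ᶠ z in 𝓝[≠] (((a + b) / 2 : ℝ) : ℂ), f z = g z := by
  have htendsto : Tendsto ((↑) : ℝ → ℂ) (𝓝[≠] ((a + b) / 2)) (𝓝[≠] (((a + b) / 2 : ℝ) : ℂ)) :=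
    continuous_ofReal.continuousWithinAt.tendsto_nhdsWithin fun _ hx ↦ ofReal_injective.ne hx
  have hmem : Ioo a b ∈ 𝓝 ((a + b) / 2) := Ioo_mem_nhds (by linarith) (by linarith)
  exact htendsto.frequently (eventually_of_mem (nhdsWithin_le_nhds hmem) hfg).frequently

lemma eq_of_differentiable_of_ae_eq_Ioo {E : Type*} [NormedAddCommGroup E]
    [NormedSpace ℂ E] [CompleteSpace E] {f g : ℂ → E} (hf : Differentiable ℂ f)
    (hg : Differentiable ℂ g) {a b : ℝ} (hab : a < b)
    (hfg : ∀ᵐ x : ℝ ∂volume.restrict (Ioo a b), f x = g x) : f = g := by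
  have hEqOn : EqOn (fun x : ℝ ↦ f x) (fun x : ℝ ↦ g x) (Ioo a b) :=
    Measure.eqOn_open_of_ae_eq hfg isOpen_Ioo
      (hf.continuous.comp continuous_ofReal).continuousOn
      (hg.continuous.comp continuous_ofReal).continuousOn
  exact (hf.differentiableOn.analyticOnNhd isOpen_univ).eq_of_frequently_eq
    (hg.differentiableOn.analyticOnNhd isOpen_univ)
    (frequently_eq_of_eqOn_ofReal_Ioo hab hEqOn)

/-- The moment generating function of `X` under the complex measure `ψ μ`, that is, `complexMGF`
with a complex density. At `z = -iτ` and `X = h` it is the data-to-pattern operator `(Lψ)(τ)`. -/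
def weightedMGF {Ω : Type*} [MeasurableSpace Ω] (X : Ω → ℝ) (ψ : Ω → ℂ) (μ : Measure Ω)
    (z : ℂ) : ℂ :=
  ∫ ω, cexp (z * X ω) * ψ ω ∂μ

section MomentGeneratingFunctions

variable {Ω Ω' : Type*} [MeasurableSpace Ω] [MeasurableSpace Ω'] {μ : Measure Ω} {ν : Measure Ω'}
  {X : Ω → ℝ} {Y : Ω' → ℝ} {ψ : Ω → ℂ} {m M : ℝ}

lemma weightedMGF_neg (z : ℂ) : weightedMGF (-X) ψ μ z = weightedMGF X ψ μ (-z) := by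
  simp [weightedMGF]

lemma weightedMGF_const_mul (c z : ℂ) :
    weightedMGF X (fun ω ↦ c * ψ ω) μ z = c * weightedMGF X ψ μ z := by
  simp only [weightedMGF, mul_left_comm _ c, integral_const_mul]

lemma norm_cexp_mul_ofReal_le {x C : ℝ} (hx : |x| ≤ C) (z : ℂ) :
    ‖cexp (z * x)‖ ≤ Real.exp (‖z‖ * C) := by
  refine (norm_exp_le_exp_norm _).trans (Real.exp_le_exp.2 ?_)
  rw [norm_mul, norm_real, Real.norm_eq_abs]
  gcongr

lemma differentiable_weightedMGF {C : ℝ} (hX : AEMeasurable X μ) (hXC : ∀ᵐ ω ∂μ, |X ω| ≤ C)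
    (hψ : Integrable ψ μ) : Differentiable ℂ (weightedMGF X ψ μ) := by
  intro z₀
  have hexp (z : ℂ) : AEStronglyMeasurable (fun ω ↦ cexp (z * X ω)) μ := by fun_prop
  refine (hasDerivAt_integral_of_dominated_loc_of_deriv_le
    (F' := fun z ω ↦ cexp (z * X ω) * X ω * ψ ω)
    (bound := fun ω ↦ Real.exp ((‖z₀‖ + 1) * C) * C * ‖ψ ω‖)
    (Metric.ball_mem_nhds z₀ one_pos) (.of_forall fun z ↦ (hexp z).mul hψ.1)
    ?_ ?_ ?_ (hψ.norm.const_mul _) ?_).2.differentiableAt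
  · exact hψ.bdd_mul (hexp z₀) (hXC.mono fun ω hω ↦ norm_cexp_mul_ofReal_le hω z₀)
  · exact ((hexp z₀).mul (by fun_prop)).mul hψ.1
  · filter_upwards [hXC] with ω hω z hz
    have hC : 0 ≤ C := (abs_nonneg _).trans hω
    have hz_norm : ‖z‖ ≤ ‖z₀‖ + 1 := norm_le_norm_add_const_of_dist_le (Metric.mem_ball.1 hz).le
    rw [norm_mul, norm_mul, norm_real, Real.norm_eq_abs]
    gcongr
    exact (norm_cexp_mul_ofReal_le hω z).trans (by gcongr)
  · refine .of_forall fun ω z _ ↦ ?_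
    exact (hasDerivAt_mul_const (X ω : ℂ)).cexp.mul_const _

lemma differentiable_complexMGF (hY : integrableExpSet Y ν = univ) :
    Differentiable ℂ (complexMGF Y ν) := fun _ ↦
  (hasDerivAt_complexMGF (by simp [hY])).differentiableAt

lemma norm_weightedMGF_ofReal_le (hXM : ∀ᵐ ω ∂μ, X ω ≤ M) (hψ : Integrable ψ μ) {s : ℝ}
    (hs : 0 ≤ s) : ‖weightedMGF X ψ μ s‖ ≤ (∫ ω, ‖ψ ω‖ ∂μ) * Real.exp (s * M) := by
  rw [← integral_mul_const]
  refine norm_integral_le_of_norm_le (hψ.norm.mul_const _) ?_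
  filter_upwards [hXM] with ω hω
  rw [norm_mul, mul_comm, ← ofReal_mul, norm_exp_ofReal]
  gcongr

lemma ae_le_of_mgf_le [IsFiniteMeasure ν] {C : ℝ}
    (hY : ∀ s : ℝ, 0 ≤ s → Integrable (fun ω ↦ Real.exp (s * Y ω)) ν)
    (hmgf : ∀ s : ℝ, 0 ≤ s → mgf Y ν s ≤ C * Real.exp (s * M)) : ∀ᵐ ω ∂ν, Y ω ≤ M := by
  refine (ae_le_const_iff_forall_gt_measure_zero Y M).2 fun A hMA ↦ ?_
  have hchernoff (s : ℝ) (hs : 0 ≤ s) :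
      ν.real {ω | A ≤ Y ω} ≤ C * Real.exp (-(s * (A - M))) :=
    calc ν.real {ω | A ≤ Y ω}
        ≤ Real.exp (-s * A) * mgf Y ν s := measure_ge_le_exp_mul_mgf A hs (hY s hs)
      _ ≤ Real.exp (-s * A) * (C * Real.exp (s * M)) := by gcongr; exact hmgf s hs
      _ = C * Real.exp (-(s * (A - M))) := by
        rw [mul_left_comm, ← Real.exp_add]
        ring_nf
  have hlim : Tendsto (fun s ↦ C * Real.exp (-(s * (A - M)))) atTop (𝓝 0) := by
    simpa using (Real.tendsto_exp_neg_atTop_nhds_zero.comp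
      (tendsto_id.atTop_mul_const (sub_pos.2 hMA))).const_mul C
  have hle : ν.real {ω | A ≤ Y ω} ≤ 0 :=
    ge_of_tendsto hlim ((eventually_ge_atTop 0).mono hchernoff)
  exact (measureReal_eq_zero_iff).1 (hle.antisymm measureReal_nonneg)

lemma ae_le_of_weightedMGF_eq_mgf [IsFiniteMeasure ν]
    (hXM : ∀ᵐ ω ∂μ, X ω ≤ M) (hψ : Integrable ψ μ)
    (hY : ∀ s : ℝ, 0 ≤ s → Integrable (fun ω ↦ Real.exp (s * Y ω)) ν)
    (heq : ∀ s : ℝ, 0 ≤ s → weightedMGF X ψ μ s = mgf Y ν s) : ∀ᵐ ω ∂ν, Y ω ≤ M := by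
  refine ae_le_of_mgf_le (C := ∫ ω, ‖ψ ω‖ ∂μ) hY fun s hs ↦ ?_
  calc mgf Y ν s = ‖weightedMGF X ψ μ s‖ := by
        rw [heq s hs, norm_real, Real.norm_of_nonneg mgf_nonneg]
    _ ≤ (∫ ω, ‖ψ ω‖ ∂μ) * Real.exp (s * M) := norm_weightedMGF_ofReal_le hXM hψ hs

lemma ae_mem_Icc_of_weightedMGF_eq_mgf [IsFiniteMeasure ν]
    (hXmM : ∀ᵐ ω ∂μ, X ω ∈ Icc m M) (hψ : Integrable ψ μ) (hY : integrableExpSet Y ν = univ)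
    (heq : ∀ s : ℝ, weightedMGF X ψ μ s = mgf Y ν s) : ∀ᵐ ω ∂ν, Y ω ∈ Icc m M := by
  have hint (s : ℝ) : Integrable (fun ω ↦ Real.exp (s * Y ω)) ν := hY.ge (mem_univ s)
  have hupper : ∀ᵐ ω ∂ν, Y ω ≤ M :=
    ae_le_of_weightedMGF_eq_mgf (hXmM.mono fun _ hω ↦ hω.2) hψ (fun s _ ↦ hint s)
      fun s _ ↦ heq s
  have hlower : ∀ᵐ ω ∂ν, (-Y) ω ≤ -m := by
    refine ae_le_of_weightedMGF_eq_mgf (X := -X) (hXmM.mono fun _ hω ↦ neg_le_neg hω.1) hψ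
      (fun s _ ↦ ?_) fun s _ ↦ ?_
    · simpa using hint (-s)
    · rw [weightedMGF_neg, mgf_neg, ← ofReal_neg, heq]
  filter_upwards [hlower, hupper] with ω hl hu using ⟨neg_le_neg_iff.1 hl, hu⟩

theorem ae_mem_Icc_of_weightedMGF_eq_complexMGF [IsFiniteMeasure ν] {a b : ℝ} (hab : a < b)
    (hX : AEMeasurable X μ) (hXmM : ∀ᵐ ω ∂μ, X ω ∈ Icc m M) (hψ : Integrable ψ μ)
    (hY : integrableExpSet Y ν = univ)
    (heq : ∀ᵐ τ : ℝ ∂volume.restrict (Ioo a b),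
      weightedMGF X ψ μ (-I * τ) = complexMGF Y ν (-I * τ)) :
    ∀ᵐ ω ∂ν, Y ω ∈ Icc m M := by
  have hXbdd : ∀ᵐ ω ∂μ, |X ω| ≤ max |m| |M| :=
    hXmM.mono fun _ hω ↦ abs_le_max_abs_abs hω.1 hω.2
  have hentire : (fun z ↦ weightedMGF X ψ μ (-I * z)) = fun z ↦ complexMGF Y ν (-I * z) :=
    eq_of_differentiable_of_ae_eq_Ioo
      ((differentiable_weightedMGF hX hXbdd hψ).comp (differentiable_id.const_mul (-I)))
      ((differentiable_complexMGF hY).comp (differentiable_id.const_mul (-I))) hab heq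
  refine ae_mem_Icc_of_weightedMGF_eq_mgf hXmM hψ hY fun s ↦ ?_
  have hs : -I * (I * s) = s := by rw [← mul_assoc, neg_mul, I_mul_I, neg_neg, one_mul]
  rw [← complexMGF_ofReal, ← hs]
  exact congrFun hentire (I * s)

end MomentGeneratingFunctions

lemma sub_le_sub_of_ae_add_mem_Icc {a b c m M : ℝ} (hab : a < b)
    (hmem : ∀ᵐ t ∂volume.restrict (Ioo a b), c + t ∈ Icc m M) : b - a ≤ M - m := by
  have hsubset : Ioo a b ≤ᵐ[volume] Icc (m - c) (M - c) := by
    filter_upwards [ae_imp_of_ae_restrict hmem] with t ht htab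
    exact ⟨sub_le_iff_le_add'.2 (ht htab).1, le_sub_iff_add_le'.2 (ht htab).2⟩
  have hvolume := measure_mono_ae hsubset
  rw [Real.volume_Ioo, Real.volume_Icc, sub_sub_sub_cancel_right,
    ENNReal.ofReal_le_ofReal_iff'] at hvolume
  exact hvolume.resolve_right (sub_pos.2 hab).not_ge

theorem testFunction_in_range_implies_observable_general {tmin tmax T K c : ℝ}
    (htt : tmin < tmax) (hT : T = tmax - tmin) (hK : 0 < K) {h : ℝ → ℝ} {ψ : ℝ → ℂ}
    (hmeas : AEMeasurable h (volume.restrict (Ioo tmin tmax)))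
    (hbdd : Bornology.IsBounded (h '' Icc tmin tmax)) (hψ : IntegrableOn ψ (Ioo tmin tmax))
    (hpattern : (fun τ : ℝ ↦ ∫ t in Ioo tmin tmax, cexp (-I * τ * h t) * ψ t)
      =ᵐ[volume.restrict (Ioo 0 K)]
        fun τ ↦ 1 / (T : ℂ) * ∫ t in Ioo tmin tmax, cexp (-I * τ * (c + t))) :
    sSup (h '' Icc tmin tmax) - sInf (h '' Icc tmin tmax) ≥ T := by
  have hT_ne : (T : ℂ) ≠ 0 := ofReal_ne_zero.2 (by linarith)
  have hrange : ∀ᵐ t ∂volume.restrict (Ioo tmin tmax),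
      h t ∈ Icc (sInf (h '' Icc tmin tmax)) (sSup (h '' Icc tmin tmax)) :=
    ae_restrict_of_forall_mem measurableSet_Ioo fun t ht ↦
      subset_Icc_csInf_csSup hbdd.bddBelow hbdd.bddAbove
        (mem_image_of_mem h (Ioo_subset_Icc_self ht))
  have hexp : integrableExpSet (fun t ↦ c + t) (volume.restrict (Ioo tmin tmax)) = univ :=
    eq_univ_of_forall fun s ↦ integrable_exp_mul_of_mem_Icc (a := c + tmin) (b := c + tmax)
      (by fun_prop) <| ae_restrict_of_forall_mem measurableSet_Ioo fun t ht ↦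
        ⟨by linarith [ht.1], by linarith [ht.2]⟩
  rw [hT]
  refine sub_le_sub_of_ae_add_mem_Icc htt (ae_mem_Icc_of_weightedMGF_eq_complexMGF hK hmeas hrange
    (hψ.const_mul (T : ℂ)) hexp ?_)
  filter_upwards [hpattern] with τ hτ
  rw [weightedMGF_const_mul, weightedMGF, hτ, ← mul_assoc, mul_one_div_cancel hT_ne, one_mul]
  simp only [complexMGF, ofReal_add]

/-- If there exist `y ∈ ℝ^d` and `ψ ∈ L²(t_min,t_max)` such that
`L^{(x̂)}ψ = φ_y^{(x̂)}` in `L²(0,K)`, then `ξ_max − ξ_min ≥ T`. Here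
`(Lψ)(τ) = ∫_{t_min}^{t_max} e^{−iτ h(t)} ψ(t) dt`,
`φ_y^{(x̂)}(k) = (1/T) ∫_{t_min}^{t_max} e^{−ik(x̂·y + t)} dt`,
`ξ_min = inf h`, `ξ_max = sup h` over `[t_min,t_max]`. -/
theorem testFunction_in_range_implies_observable
    {d : ℕ} (hd : d = 2 ∨ d = 3)
    (tmin tmax T : ℝ) (htmin : 0 < tmin) (htt : tmin < tmax)
    (hT : T = tmax - tmin)
    (K : ℝ) (hK : 0 < K)
    (a : ℝ → EuclideanSpace ℝ (Fin d))
    (ha : ContDiffOn ℝ 1 a (Set.Icc tmin tmax))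
    (xhat : EuclideanSpace ℝ (Fin d)) (hxhat : ‖xhat‖ = 1)
    (h : ℝ → ℝ) (hh : ∀ t, h t = t + inner ℝ xhat (a t))
    (L : Lp ℂ 2 (volume.restrict (Set.Ioo tmin tmax)) →L[ℂ]
         Lp ℂ 2 (volume.restrict (Set.Ioo 0 K)))
    (hL : ∀ ψ : Lp ℂ 2 (volume.restrict (Set.Ioo tmin tmax)),
      (L ψ : ℝ → ℂ) =ᵐ[volume.restrict (Set.Ioo 0 K)]
        fun τ => ∫ t in Set.Ioo tmin tmax,
          Complex.exp (-(Complex.I) * τ * (h t)) * ψ t)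
    (hexists : ∃ (y : EuclideanSpace ℝ (Fin d))
        (ψ : Lp ℂ 2 (volume.restrict (Set.Ioo tmin tmax))),
      (L ψ : ℝ → ℂ) =ᵐ[volume.restrict (Set.Ioo 0 K)]
        fun k => (1 / (T : ℂ)) *
          ∫ t in Set.Ioo tmin tmax,
            Complex.exp (-(Complex.I) * k * ((inner ℝ xhat y : ℝ) + t))) :
    sSup (h '' Set.Icc tmin tmax) - sInf (h '' Set.Icc tmin tmax) ≥ T := by
  obtain ⟨y, ψ, hψ⟩ := hexists
  have hcont : ContinuousOn h (Icc tmin tmax) :=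
    (continuousOn_id.add (continuousOn_const.inner ha.continuousOn)).congr fun t _ ↦ hh t
  exact testFunction_in_range_implies_observable_general htt hT hK
    ((hcont.mono Ioo_subset_Icc_self).aemeasurable measurableSet_Ioo)
    (isCompact_Icc.image_of_continuousOn hcont).isBounded
    ((Lp.memLp ψ).integrable one_le_two) ((hL ψ).symm.trans hψ)
end
end

section
/- Let the orbit be the straight line a(t) = c t (cos α, sin α) in ℝ² with speed c > 2, and let x̂ = (cos θ, sin θ). If θ ∈ [α − π/2, α + π/2] or θ ∈ [α + arccos(−2/c), α + 2π − arccos(−2/c)] (equivalently cos(θ − α) ≥ 0 or cos(θ − α) ≤ −2/c), then x̂ is an observable direction, i.e. ξ_max − ξ_min ≥ T. -/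
open MeasureTheory

noncomputable section

/-!
For uniform motion `a(t) = p + t v` the function `h` is affine in `t` with slope `1 + x̂·v`, so
`ξ_max − ξ_min = |1 + x̂·v| T`. Hence `x̂` is observable exactly when `x̂·v ≥ 0` or `x̂·v ≤ −2`,
and in the plane `x̂·v = c cos(θ − α)`.
-/

/-- The function `h(t) = t + x̂·a(t)` attached to an orbit `a` and a direction `x` in an arbitrary
real inner product space. -/
def phase {E : Type*} [NormedAddCommGroup E] [InnerProductSpace ℝ E]
    (a : ℝ → E) (x : E) (t : ℝ) : ℝ :=
  t + inner ℝ x (a t)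

/-- Observability `ξ_max − ξ_min ≥ T` of the direction `x` for the orbit `a` on `[tmin, tmax]`.
The vector `x` is not required to have norm one, and the real `sSup` and `sInf` have their intended
meaning only when `h` is bounded on `[tmin, tmax]`, e.g. for continuous `a`, and `tmin ≤ tmax`. -/
def IsObservable {E : Type*} [NormedAddCommGroup E] [InnerProductSpace ℝ E]
    (tmin tmax : ℝ) (a : ℝ → E) (x : E) : Prop :=
  tmax - tmin ≤
    sSup (phase a x '' Set.Icc tmin tmax) - sInf (phase a x '' Set.Icc tmin tmax)

/-- The unit vector of `ℝ²` with polar angle `θ`. -/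
def unitVector (θ : ℝ) : EuclideanSpace ℝ (Fin 2) :=
  !₂[Real.cos θ, Real.sin θ]

theorem inner_unitVector (θ α : ℝ) :
    inner ℝ (unitVector θ) (unitVector α) = Real.cos (θ - α) := by
  simp [unitVector, PiLp.inner_apply, Real.cos_sub, mul_comm]

theorem smul_smul_unitVector (t c α : ℝ) :
    t • c • unitVector α = !₂[c * t * Real.cos α, c * t * Real.sin α] := by
  ext i
  fin_cases i <;> simp [unitVector] <;> ring

theorem cos_le_of_mem_Icc_arccos {y φ : ℝ} (hy : -1 ≤ y)
    (hφ : φ ∈ Set.Icc (Real.arccos y) (2 * Real.pi - Real.arccos y)) : Real.cos φ ≤ y := by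
  rcases le_total 1 y with one_le | le_one
  · exact (Real.cos_le_one φ).trans one_le
  rw [← Real.cos_arccos hy le_one]
  rcases le_total φ Real.pi with le_pi | pi_le
  · exact Real.cos_le_cos_of_nonneg_of_le_pi (Real.arccos_nonneg y) le_pi hφ.1
  · rw [← Real.cos_two_pi_sub φ]
    exact Real.cos_le_cos_of_nonneg_of_le_pi (Real.arccos_nonneg y) (by linarith)
      (by linarith [hφ.2])

theorem mul_cos_sub_nonneg_or_le_neg_two {c α θ : ℝ} (hc : 2 ≤ c)
    (hθ : θ ∈ Set.Icc (α - Real.pi / 2) (α + Real.pi / 2) ∨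
      θ ∈ Set.Icc (α + Real.arccos (-2 / c)) (α + 2 * Real.pi - Real.arccos (-2 / c))) :
    0 ≤ c * Real.cos (θ - α) ∨ c * Real.cos (θ - α) ≤ -2 := by
  have c_pos : 0 < c := by linarith
  refine hθ.imp (fun ⟨lower, upper⟩ => ?_) (fun ⟨lower, upper⟩ => ?_)
  · exact mul_nonneg c_pos.le
      (Real.cos_nonneg_of_neg_pi_div_two_le_of_le (by linarith) (by linarith))
  · have neg_one_le : -1 ≤ -2 / c := by
      rw [le_div_iff₀ c_pos]
      linarith
    exact (le_div_iff₀' c_pos).1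
      (cos_le_of_mem_Icc_arccos neg_one_le ⟨by linarith, by linarith⟩)

open scoped Pointwise in
theorem sSup_sub_sInf_image_affine {s : Set ℝ} (hs : Bornology.IsBounded s) (q k : ℝ) :
    sSup ((fun t => q + k * t) '' s) - sInf ((fun t => q + k * t) '' s) =
      |k| * (sSup s - sInf s) := by
  have image_eq : (fun t => q + k * t) '' s = q +ᵥ k • s := by
    simp only [← Set.image_smul, ← Set.image_vadd, Set.image_image, vadd_eq_add, smul_eq_mul]
  have bounded : Bornology.IsBounded (q +ᵥ k • s) := (hs.smul₀ k).vadd q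
  rw [image_eq, ← Real.diam_eq bounded, ← Real.diam_eq hs, diam_vadd, diam_smul₀,
    Real.norm_eq_abs]

theorem one_le_abs_one_add_iff {r : ℝ} : 1 ≤ |1 + r| ↔ 0 ≤ r ∨ r ≤ -2 := by
  rw [le_abs, le_add_iff_nonneg_right]
  exact or_congr_right ⟨fun _ => by linarith, fun _ => by linarith⟩

section Line

variable {E : Type*} [NormedAddCommGroup E] [InnerProductSpace ℝ E] {tmin tmax : ℝ}

theorem phase_line (p v x : E) :
    phase (fun t => p + t • v) x = fun t => inner ℝ x p + (1 + inner ℝ x v) * t := by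
  funext t
  rw [phase, inner_add_right, real_inner_smul_right]
  ring

theorem sSup_sub_sInf_phase_line (htt : tmin ≤ tmax) (p v x : E) :
    sSup (phase (fun t => p + t • v) x '' Set.Icc tmin tmax) -
        sInf (phase (fun t => p + t • v) x '' Set.Icc tmin tmax) =
      |1 + inner ℝ x v| * (tmax - tmin) := by
  rw [phase_line, sSup_sub_sInf_image_affine (Metric.isBounded_Icc tmin tmax),
    csSup_Icc htt, csInf_Icc htt]

theorem line_observable_fast_general (htt : tmin < tmax) (p v x : E) :
    IsObservable tmin tmax (fun t => p + t • v) x ↔ 0 ≤ inner ℝ x v ∨ inner ℝ x v ≤ -2 := by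
  rw [IsObservable, sSup_sub_sInf_phase_line htt.le,
    le_mul_iff_one_le_left (sub_pos.2 htt), one_le_abs_one_add_iff]

end Line

/-- For the straight-line orbit `a(t) = c t (cos α, sin α)` in `ℝ²` with
speed `c > 2` and direction `x̂ = (cos θ, sin θ)`: if `θ ∈ [α − π/2, α + π/2]` or
`θ ∈ [α + arccos(−2/c), α + 2π − arccos(−2/c)]` (equivalently `cos(θ − α) ≥ 0` or
`cos(θ − α) ≤ −2/c`), then `x̂` is an observable direction, i.e. `ξ_max − ξ_min ≥ T`. -/
theorem line_observable_fast
    (tmin tmax T : ℝ) (htmin : 0 < tmin) (htt : tmin < tmax)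
    (hT : T = tmax - tmin)
    (c α θ : ℝ) (hc : 2 < c)
    (hθ : θ ∈ Set.Icc (α - Real.pi / 2) (α + Real.pi / 2) ∨
      θ ∈ Set.Icc (α + Real.arccos (-2 / c))
        (α + 2 * Real.pi - Real.arccos (-2 / c)))
    (a : ℝ → EuclideanSpace ℝ (Fin 2))
    (ha : ∀ t, a t = (WithLp.equiv 2 (Fin 2 → ℝ)).symm
      ![c * t * Real.cos α, c * t * Real.sin α])
    (xhat : EuclideanSpace ℝ (Fin 2))
    (hx : xhat = (WithLp.equiv 2 (Fin 2 → ℝ)).symm ![Real.cos θ, Real.sin θ])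
    (h : ℝ → ℝ) (hh : ∀ t, h t = t + inner ℝ xhat (a t)) :
    sSup (h '' Set.Icc tmin tmax) - sInf (h '' Set.Icc tmin tmax) ≥ T := by
  obtain rfl : a = fun t => 0 + t • c • unitVector α :=
    funext fun t => by rw [ha, zero_add, smul_smul_unitVector]; rfl
  obtain rfl : xhat = unitVector θ := hx
  obtain rfl : h = phase _ _ := funext hh
  rw [hT, ge_iff_le]
  refine (line_observable_fast_general htt 0 _ _).2 ?_
  rw [real_inner_smul_right, inner_unitVector]
  exact mul_cos_sub_nonneg_or_le_neg_two hc.le hθ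
end
end

section
/- Uniqueness at a single observable direction: let a, b : [t_min, t_max] → ℝ^d be continuously differentiable orbit functions whose far-field patterns agree, w_a∞(x̂, k) = w_b∞(x̂, k) for all k ∈ (k_min, k_max), at a direction x̂ that is observable for both a and b; assume in addition for each of a and b that h is not constant and the sets {t : cos(κ h(t)) = 0} and {t : sin(κ h(t)) = 0} have Lebesgue measure zero. Then the strips coincide: K_{Γ_a}^{(x̂)} = K_{Γ_b}^{(x̂)}. In particular, if additionally 1 + x̂·a'(t) > 0 and 1 + x̂·b'(t) > 0 on [t_min, t_max], then x̂·a(t_min) = x̂·b(t_min) and x̂·a(t_max) = x̂·b(t_max). -/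
open MeasureTheory

noncomputable section

/-!
The far-field pattern `w_c∞(x̂, ·)` is, up to a constant, the conjugate of the characteristic
function of the pushforward of Lebesgue measure on `(t_min, t_max)` under `h_c`. This pushforward
has compact support, so its characteristic function is real-analytic and the data on any set of
frequencies with an accumulation point determine it, hence also the measure. The support of the
measure is `h_c([t_min, t_max])`, whose infimum and supremum fix the strip. When `h_c` is
monotone these extrema are its values at `t_min` and `t_max`.
-/

open Set Filter Topology ProbabilityTheory

section CharFun

variable {Ω Ω' : Type*} {mΩ : MeasurableSpace Ω} {mΩ' : MeasurableSpace Ω'}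
  {μ : Measure Ω} {ν : Measure Ω'} {X : Ω → ℝ} {Y : Ω' → ℝ}

lemma analyticOnNhd_charFun_map (hX : 0 ∈ interior (integrableExpSet X μ)) :
    AnalyticOnNhd ℝ (charFun (μ.map X)) univ := by
  have charFun_eq : charFun (μ.map X) = fun t : ℝ => complexMGF X μ (t * Complex.I) :=
    funext fun t => (complexMGF_mul_I (aemeasurable_of_mem_interior_integrableExpSet hX) t).symm
  intro t _
  have mgf_analytic : AnalyticAt ℂ (complexMGF X μ) (t * Complex.I) :=
    analyticAt_complexMGF (by simpa using hX)
  have line_analytic : AnalyticAt ℝ (fun s : ℝ => (s : ℂ) * Complex.I) t :=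
    (Complex.ofRealCLM.analyticAt t).mul analyticAt_const
  rw [charFun_eq]
  exact mgf_analytic.restrictScalars.fun_comp_of_eq line_analytic rfl

lemma map_eq_map_of_frequently_charFun_eq [IsFiniteMeasure μ] [IsFiniteMeasure ν]
    (hX : 0 ∈ interior (integrableExpSet X μ)) (hY : 0 ∈ interior (integrableExpSet Y ν)) {t₀ : ℝ}
    (h : ∃ᶠ t in 𝓝[≠] t₀, charFun (μ.map X) t = charFun (ν.map Y) t) :
    μ.map X = ν.map Y :=
  Measure.ext_of_charFun <|
    (analyticOnNhd_charFun_map hX).eq_of_frequently_eq (analyticOnNhd_charFun_map hY) h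

end CharFun

section Support

variable {X Y : Type*} [TopologicalSpace X] [MeasurableSpace X] [OpensMeasurableSpace X]
  [TopologicalSpace Y] [MeasurableSpace Y] [BorelSpace Y] {μ : Measure X} {U : Set X}

lemma map_restrict_compl_eq_zero_iff_mapsTo_closure [μ.IsOpenPosMeasure] (hU : IsOpen U)
    {f : X → Y} (hf : ContinuousOn f (closure U)) {C : Set Y} (hC : IsClosed C) :
    (μ.restrict U).map f Cᶜ = 0 ↔ MapsTo f (closure U) C := by
  have hfU : ContinuousOn f U := hf.mono subset_closure
  have isOpen_escape : IsOpen (U ∩ f ⁻¹' Cᶜ) := hfU.isOpen_inter_preimage hU hC.isOpen_compl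
  rw [Measure.map_apply_of_aemeasurable (hfU.aemeasurable hU.measurableSet)
      hC.measurableSet.compl, Measure.restrict_apply' hU.measurableSet, inter_comm,
    isOpen_escape.measure_eq_zero_iff μ, preimage_compl, ← sdiff_eq, sdiff_eq_empty]
  refine ⟨fun (hUC : MapsTo f U C) => ?_, fun h => subset_closure.trans h⟩
  simpa only [hC.closure_eq] using hUC.closure_of_continuousOn hf

lemma image_closure_eq_of_map_restrict_eq [T2Space Y] [μ.IsOpenPosMeasure] (hU : IsOpen U)
    (hUc : IsCompact (closure U)) {f g : X → Y} (hf : ContinuousOn f (closure U))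
    (hg : ContinuousOn g (closure U)) (h : (μ.restrict U).map f = (μ.restrict U).map g) :
    f '' closure U = g '' closure U := by
  have mapsTo_iff {C : Set Y} (hC : IsClosed C) :
      MapsTo f (closure U) C ↔ MapsTo g (closure U) C := by
    rw [← map_restrict_compl_eq_zero_iff_mapsTo_closure (μ := μ) hU hf hC, h,
      map_restrict_compl_eq_zero_iff_mapsTo_closure hU hg hC]
  exact Subset.antisymm
    ((mapsTo_iff (hUc.image_of_continuousOn hg).isClosed).2 (mapsTo_image g _)).image_subset
    ((mapsTo_iff (hUc.image_of_continuousOn hf).isClosed).1 (mapsTo_image f _)).image_subset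

lemma integrableExpSet_restrict_eq_univ [IsFiniteMeasureOnCompacts μ]
    (hUc : IsCompact (closure U)) {f : X → ℝ} (hf : ContinuousOn f (closure U)) :
    integrableExpSet f (μ.restrict U) = univ := by
  refine eq_univ_of_forall fun s => ?_
  have exp_continuousOn : ContinuousOn (fun x => Real.exp (s * f x)) (closure U) := by fun_prop
  have exp_integrableOn : IntegrableOn (fun x => Real.exp (s * f x)) (closure U) μ :=
    exp_continuousOn.integrableOn_compact' hUc isClosed_closure.measurableSet
  exact exp_integrableOn.mono_set subset_closure

lemma image_closure_eq_of_frequently_charFun_eq [μ.IsOpenPosMeasure]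
    [IsFiniteMeasureOnCompacts μ] (hU : IsOpen U) (hUc : IsCompact (closure U)) {f g : X → ℝ}
    (hf : ContinuousOn f (closure U)) (hg : ContinuousOn g (closure U)) {t₀ : ℝ}
    (h : ∃ᶠ t in 𝓝[≠] t₀,
      charFun ((μ.restrict U).map f) t = charFun ((μ.restrict U).map g) t) :
    f '' closure U = g '' closure U := by
  have : IsFiniteMeasure (μ.restrict U) :=
    isFiniteMeasure_restrict.2 (measure_mono subset_closure |>.trans_lt hUc.measure_lt_top).ne
  refine image_closure_eq_of_map_restrict_eq (μ := μ) hU hUc hf hg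
    (map_eq_map_of_frequently_charFun_eq ?_ ?_ h)
  · simp [integrableExpSet_restrict_eq_univ hUc hf]
  · simp [integrableExpSet_restrict_eq_univ hUc hg]

end Support

section Orbit

variable {E : Type*} [NormedAddCommGroup E] [InnerProductSpace ℝ E]

/-- The function `h_c(t) = t + x̂·c(t)` of the orbit `c` in the direction `x`. -/
def orbitPhase (x : E) (c : ℝ → E) (t : ℝ) : ℝ := t + inner ℝ x (c t)

/-- The far-field pattern `w_c∞(x̂, k)` of the orbit `c` over the time window `(tmin, tmax)`. -/
def farFieldPattern (tmin tmax : ℝ) (x : E) (c : ℝ → E) (k : ℝ) : ℂ :=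
  (1 / Real.sqrt (2 * Real.pi)) *
    ∫ t in Ioo tmin tmax, Complex.exp (-(Complex.I) * k * (orbitPhase x c t))

/-- The strip `K_{Γ_c}^{(x̂)}` of the orbit `c` over the time window `[tmin, tmax]`. -/
def orbitStrip (tmin tmax : ℝ) (x : E) (c : ℝ → E) : Set E :=
  {y | sInf (orbitPhase x c '' Icc tmin tmax) - tmin ≤ inner ℝ x y ∧
    inner ℝ x y ≤ sSup (orbitPhase x c '' Icc tmin tmax) - tmax}

variable {tmin tmax : ℝ} {x : E} {a b c c' : ℝ → E}

lemma continuousOn_orbitPhase {s : Set ℝ} (hc : ContinuousOn c s) :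
    ContinuousOn (orbitPhase x c) s :=
  continuousOn_id.add (continuousOn_const.inner hc)

lemma monotoneOn_orbitPhase {s : Set ℝ} (hs : Convex ℝ s)
    (hc' : ∀ t ∈ s, HasDerivWithinAt c (c' t) s t) (hnonneg : ∀ t ∈ s, 0 ≤ 1 + inner ℝ x (c' t)) :
    MonotoneOn (orbitPhase x c) s := by
  have hasDeriv (t : ℝ) (ht : t ∈ s) :
      HasDerivWithinAt (orbitPhase x c) (1 + inner ℝ x (c' t)) s t :=
    (hasDerivWithinAt_id t s).add
      ((innerSL ℝ x).hasFDerivAt.comp_hasDerivWithinAt t (hc' t ht))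
  exact monotoneOn_of_hasDerivWithinAt_nonneg hs
    (fun t ht => (hasDeriv t ht).continuousWithinAt)
    (fun t ht => (hasDeriv t (interior_subset ht)).mono interior_subset)
    (fun t ht => hnonneg t (interior_subset ht))

lemma farFieldPattern_eq_conj_charFun (hc : ContinuousOn c (Icc tmin tmax)) (k : ℝ) :
    farFieldPattern tmin tmax x c k = (1 / Real.sqrt (2 * Real.pi)) *
      starRingEnd ℂ (charFun ((volume.restrict (Ioo tmin tmax)).map (orbitPhase x c)) k) := by
  have phase_aemeasurable : AEMeasurable (orbitPhase x c) (volume.restrict (Ioo tmin tmax)) :=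
    (continuousOn_orbitPhase (hc.mono Ioo_subset_Icc_self)).aemeasurable measurableSet_Ioo
  rw [← charFun_neg, ← complexMGF_mul_I phase_aemeasurable, farFieldPattern, complexMGF]
  push_cast
  simp only [neg_mul, mul_comm Complex.I]

lemma charFun_map_orbitPhase_eq_of_farFieldPattern_eq (ha : ContinuousOn a (Icc tmin tmax))
    (hb : ContinuousOn b (Icc tmin tmax)) {k : ℝ}
    (h : farFieldPattern tmin tmax x a k = farFieldPattern tmin tmax x b k) :
    charFun ((volume.restrict (Ioo tmin tmax)).map (orbitPhase x a)) k =
      charFun ((volume.restrict (Ioo tmin tmax)).map (orbitPhase x b)) k := by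
  have const_ne_zero : (1 / Real.sqrt (2 * Real.pi) : ℂ) ≠ 0 := by
    exact_mod_cast (by positivity : 1 / Real.sqrt (2 * Real.pi) ≠ 0)
  rw [farFieldPattern_eq_conj_charFun ha, farFieldPattern_eq_conj_charFun hb] at h
  exact (starRingEnd ℂ).injective (mul_left_cancel₀ const_ne_zero h)

theorem image_orbitPhase_eq_of_frequently_farFieldPattern_eq (htt : tmin < tmax)
    (ha : ContinuousOn a (Icc tmin tmax)) (hb : ContinuousOn b (Icc tmin tmax)) {k₀ : ℝ}
    (h : ∃ᶠ k in 𝓝[≠] k₀, farFieldPattern tmin tmax x a k = farFieldPattern tmin tmax x b k) :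
    orbitPhase x a '' Icc tmin tmax = orbitPhase x b '' Icc tmin tmax := by
  have charFun_eq := h.mono fun _ => charFun_map_orbitPhase_eq_of_farFieldPattern_eq ha hb
  rw [← closure_Ioo htt.ne] at ha hb ⊢
  have isCompact_closure : IsCompact (closure (Ioo tmin tmax)) := by
    simpa only [closure_Ioo htt.ne] using isCompact_Icc
  exact image_closure_eq_of_frequently_charFun_eq isOpen_Ioo isCompact_closure
    (continuousOn_orbitPhase ha) (continuousOn_orbitPhase hb) charFun_eq

lemma inner_endpoints_eq_of_image_orbitPhase_eq (htt : tmin ≤ tmax)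
    (ha : MonotoneOn (orbitPhase x a) (Icc tmin tmax))
    (hb : MonotoneOn (orbitPhase x b) (Icc tmin tmax))
    (h : orbitPhase x a '' Icc tmin tmax = orbitPhase x b '' Icc tmin tmax) :
    inner ℝ x (a tmin) = inner ℝ x (b tmin) ∧ inner ℝ x (a tmax) = inner ℝ x (b tmax) := by
  have phase_tmin_eq : orbitPhase x a tmin = orbitPhase x b tmin :=
    (h ▸ ha.map_isLeast (isLeast_Icc htt)).unique (hb.map_isLeast (isLeast_Icc htt))
  have phase_tmax_eq : orbitPhase x a tmax = orbitPhase x b tmax :=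
    (h ▸ ha.map_isGreatest (isGreatest_Icc htt)).unique (hb.map_isGreatest (isGreatest_Icc htt))
  exact ⟨add_left_cancel phase_tmin_eq, add_left_cancel phase_tmax_eq⟩

theorem uniqueness_single_observable_direction_general (htt : tmin < tmax)
    (ha : ContinuousOn a (Icc tmin tmax)) (hb : ContinuousOn b (Icc tmin tmax)) {k₀ : ℝ}
    (h : ∃ᶠ k in 𝓝[≠] k₀, farFieldPattern tmin tmax x a k = farFieldPattern tmin tmax x b k) :
    orbitStrip tmin tmax x a = orbitStrip tmin tmax x b ∧
      (MonotoneOn (orbitPhase x a) (Icc tmin tmax) →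
        MonotoneOn (orbitPhase x b) (Icc tmin tmax) →
        inner ℝ x (a tmin) = inner ℝ x (b tmin) ∧ inner ℝ x (a tmax) = inner ℝ x (b tmax)) := by
  have image_eq := image_orbitPhase_eq_of_frequently_farFieldPattern_eq htt ha hb h
  exact ⟨by simp only [orbitStrip, image_eq],
    fun hma hmb => inner_endpoints_eq_of_image_orbitPhase_eq htt.le hma hmb image_eq⟩

end Orbit

/-- uniqueness at a single observable direction. Let `a, b` be C¹ orbit
functions whose far-field patterns agree on `(k_min, k_max)` at a direction `x̂` observable
for both, and assume for each orbit that `h` is not constant and the zero sets of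
`cos(κ h(·))`, `sin(κ h(·))` have measure zero. Then the strips coincide:
`K_{Γ_a}^{(x̂)} = K_{Γ_b}^{(x̂)}`. In particular, if additionally `1 + x̂·a'(t) > 0` and
`1 + x̂·b'(t) > 0` on `[t_min,t_max]`, then `x̂·a(t_min) = x̂·b(t_min)` and
`x̂·a(t_max) = x̂·b(t_max)`. -/
theorem uniqueness_single_observable_direction
    {d : ℕ} (hd : d = 2 ∨ d = 3)
    (tmin tmax T : ℝ) (htmin : 0 < tmin) (htt : tmin < tmax)
    (hT : T = tmax - tmin)
    (kmin kmax : ℝ) (hkmin : 0 < kmin) (hkk : kmin < kmax)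
    (κ K : ℝ) (hκ : κ = (kmin + kmax) / 2) (hKdef : K = (kmax - kmin) / 2)
    (a b a' b' : ℝ → EuclideanSpace ℝ (Fin d))
    (ha : ContDiffOn ℝ 1 a (Set.Icc tmin tmax))
    (hb : ContDiffOn ℝ 1 b (Set.Icc tmin tmax))
    (ha' : ∀ t ∈ Set.Icc tmin tmax,
      HasDerivWithinAt a (a' t) (Set.Icc tmin tmax) t)
    (hb' : ∀ t ∈ Set.Icc tmin tmax,
      HasDerivWithinAt b (b' t) (Set.Icc tmin tmax) t)
    (xhat : EuclideanSpace ℝ (Fin d)) (hxhat : ‖xhat‖ = 1)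
    (hA hB : ℝ → ℝ)
    (hhA : ∀ t, hA t = t + inner ℝ xhat (a t))
    (hhB : ∀ t, hB t = t + inner ℝ xhat (b t))
    (ξminA ξmaxA ξminB ξmaxB : ℝ)
    (hξminA : ξminA = sInf (hA '' Set.Icc tmin tmax))
    (hξmaxA : ξmaxA = sSup (hA '' Set.Icc tmin tmax))
    (hξminB : ξminB = sInf (hB '' Set.Icc tmin tmax))
    (hξmaxB : ξmaxB = sSup (hB '' Set.Icc tmin tmax))
    (hobsA : ξmaxA - ξminA ≥ T) (hobsB : ξmaxB - ξminB ≥ T)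
    (hncA : ∃ t ∈ Set.Icc tmin tmax, ∃ s ∈ Set.Icc tmin tmax, hA t ≠ hA s)
    (hncB : ∃ t ∈ Set.Icc tmin tmax, ∃ s ∈ Set.Icc tmin tmax, hB t ≠ hB s)
    (hcosA : volume {t ∈ Set.Icc tmin tmax | Real.cos (κ * hA t) = 0} = 0)
    (hsinA : volume {t ∈ Set.Icc tmin tmax | Real.sin (κ * hA t) = 0} = 0)
    (hcosB : volume {t ∈ Set.Icc tmin tmax | Real.cos (κ * hB t) = 0} = 0)
    (hsinB : volume {t ∈ Set.Icc tmin tmax | Real.sin (κ * hB t) = 0} = 0)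
    (hdata : ∀ k ∈ Set.Ioo kmin kmax,
      (1 / Real.sqrt (2 * Real.pi)) *
        (∫ t in Set.Ioo tmin tmax, Complex.exp (-(Complex.I) * k * (hA t)))
      = (1 / Real.sqrt (2 * Real.pi)) *
        ∫ t in Set.Ioo tmin tmax, Complex.exp (-(Complex.I) * k * (hB t))) :
    ({y : EuclideanSpace ℝ (Fin d) | ξminA - tmin ≤ inner ℝ xhat y ∧
        (inner ℝ xhat y : ℝ) ≤ ξmaxA - tmax}
      = {y : EuclideanSpace ℝ (Fin d) | ξminB - tmin ≤ inner ℝ xhat y ∧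
        (inner ℝ xhat y : ℝ) ≤ ξmaxB - tmax}) ∧
    ((∀ t ∈ Set.Icc tmin tmax, 0 < 1 + (inner ℝ xhat (a' t) : ℝ)) →
      (∀ t ∈ Set.Icc tmin tmax, 0 < 1 + (inner ℝ xhat (b' t) : ℝ)) →
      (inner ℝ xhat (a tmin) : ℝ) = inner ℝ xhat (b tmin) ∧
      (inner ℝ xhat (a tmax) : ℝ) = inner ℝ xhat (b tmax)) := by
  obtain rfl : hA = orbitPhase xhat a := funext hhA
  obtain rfl : hB = orbitPhase xhat b := funext hhB
  subst hξminA hξmaxA hξminB hξmaxB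
  obtain ⟨k₀, hk₀⟩ := exists_between hkk
  have data_near : ∀ᶠ k in 𝓝[≠] k₀,
      farFieldPattern tmin tmax xhat a k = farFieldPattern tmin tmax xhat b k :=
    eventually_nhdsWithin_of_eventually_nhds (mem_of_superset (Ioo_mem_nhds hk₀.1 hk₀.2) hdata)
  obtain ⟨strip_eq, endpoints_eq⟩ := uniqueness_single_observable_direction_general htt
    ha.continuousOn hb.continuousOn data_near.frequently
  exact ⟨strip_eq, fun hpa hpb => endpoints_eq
    (monotoneOn_orbitPhase (convex_Icc _ _) ha' fun t ht => (hpa t ht).le)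
    (monotoneOn_orbitPhase (convex_Icc _ _) hb' fun t ht => (hpb t ht).le)⟩
end
end
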